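/- arXiv:1704.08213 — 3 statements merged into one kernel-verified Lean document; each statement's English description precedes it below -/
import Mathlib

section
/- Let m ≥ 2, let ‖·‖_F be a norm on ℝ^m, let X be a standard Gaussian vector in ℝ^m, and for a linear map J : ℝ^m → ℝ^m let ‖J‖_{2→F} denote its operator norm from the Euclidean space ℓ₂^m to (ℝ^m, ‖·‖_F). (i) If J satisfies 𝔼‖J X‖_F = 1 and 𝔼‖J P X‖_F ≥ rank(P)/m for every orthogonal projection P on ℓ₂^m, then ‖J‖_{2→F} ≤ 5 · (log m)^{−1/2}. (ii) Every linear map J with 𝔼‖J X‖_F = 1 satisfies ‖J‖_{2→F} ≥ √(π/2) · m^{−1}. -/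
open MeasureTheory ProbabilityTheory

/-- The distribution of a standard Gaussian vector in `ℝ^m`. -/
noncomputable def stdGaussian (m : ℕ) : Measure (Fin m → ℝ) :=
  Measure.pi fun _ => gaussianReal 0 1

/-- The operator norm of a linear map `J` from the Euclidean space `ℓ₂^m`
to `(ℝ^m, nF)`, for a norm `nF` on `ℝ^m`. -/
noncomputable def opNormF (m : ℕ) (nF : (Fin m → ℝ) → ℝ)
    (J : (Fin m → ℝ) →ₗ[ℝ] (Fin m → ℝ)) : ℝ :=
  ⨆ x : {x : Fin m → ℝ // ∑ i, x i ^ 2 ≤ 1}, nF (J x.1)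

/-!
Write `q v = ‖J v‖_F` and split the Gaussian vector as `X = P_K X + P_{Kᗮ} X` with independent
summands. Since `P_{Kᗮ} X` is symmetric, the triangle inequality gives
`max (q v) (𝔼 q (P_{Kᗮ} X)) ≤ 𝔼 q (v + P_{Kᗮ} X)` for every `v`. Take `K = ℝ u` with `u` a unit
vector, put `a = q u` and `M = 𝔼 q (P_{Kᗮ} X)`, and average over `v = P_K X = g u`, where `g` is a
standard normal variable: `𝔼 max (|g| a) M ≤ 𝔼 q X = 1`. As `M ≥ 1 - 1/m`, the excess
`𝔼 (|g| a - M)₊` is at most `1/m`; the Gaussian tail beyond `1/a` makes it at least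
`a exp (-1/a²) / 6`, which forces `a ≤ 5 / √(log m)`.

For the lower bound, expand `X` in an orthonormal basis `(b i)`: the triangle inequality gives
`1 = 𝔼 q X ≤ √(2/π) ∑ q (b i)`, where `√(2/π) = 𝔼 |g|`.
-/

open scoped RealInnerProductSpace Convolution

section GaussianReal

lemma integral_Ioi_mul_exp_neg_mul_sq {b : ℝ} (hb : 0 < b) :
    ∫ y in Set.Ioi (0 : ℝ), y * Real.exp (-b * y ^ 2) = (2 * b)⁻¹ := by
  have h := integral_mul_cexp_neg_mul_sq (b := b) (by simpa using hb)
  have hcast (y : ℝ) : (y : ℂ) * Complex.exp (-b * y ^ 2) =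
      ((y * Real.exp (-b * y ^ 2) : ℝ) : ℂ) := by push_cast; rfl
  simp_rw [hcast] at h
  rw [integral_complex_ofReal] at h
  exact_mod_cast h

lemma integral_abs_gaussianReal : ∫ t, |t| ∂gaussianReal 0 1 = √(2 / Real.pi) := by
  have hpdf (t : ℝ) : gaussianPDFReal 0 1 t • |t| =
      (√(2 * Real.pi))⁻¹ * (|t| * Real.exp (-(1 / 2) * |t| ^ 2)) := by
    simp only [gaussianPDFReal, NNReal.coe_one, sub_zero, smul_eq_mul, sq_abs]
    ring_nf
  rw [integral_gaussianReal_eq_integral_smul one_ne_zero, integral_congr_ae (ae_of_all _ hpdf),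
    integral_comp_abs (f := fun y => (√(2 * Real.pi))⁻¹ * (y * Real.exp (-(1 / 2) * y ^ 2))),
    integral_const_mul, integral_Ioi_mul_exp_neg_mul_sq one_half_pos,
    Real.sqrt_mul zero_le_two, Real.sqrt_div zero_le_two]
  field_simp
  norm_num

lemma exp_neg_sq_div_le_gaussianPDFReal (s y : ℝ) :
    Real.exp (-s ^ 2) / √(2 * Real.pi) * Real.exp (-1 * y ^ 2) ≤ gaussianPDFReal (-s) 1 y := by
  have hexp : Real.exp (-s ^ 2) * Real.exp (-1 * y ^ 2) ≤ Real.exp (-(y + s) ^ 2 / 2) := by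
    rw [← Real.exp_add, Real.exp_le_exp]
    linarith [add_sq_le (a := y) (b := s)]
  simp only [gaussianPDFReal, NNReal.coe_one, mul_one, sub_neg_eq_add]
  rw [div_mul_eq_mul_div, div_eq_inv_mul]
  gcongr

lemma exp_neg_sq_div_le_integral_max_sub_gaussianReal (s : ℝ) :
    Real.exp (-s ^ 2) / (2 * √(2 * Real.pi)) ≤ ∫ t, max (t - s) 0 ∂gaussianReal 0 1 := by
  set c := Real.exp (-s ^ 2) / √(2 * Real.pi) with hc
  have hint : Integrable (fun y => gaussianPDFReal (-s) 1 y • max y 0) := by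
    have h : Integrable (fun y : ℝ => max y 0) (gaussianReal (-s) 1) :=
      IsGaussian.integrable_id.sup (integrable_const 0)
    rw [gaussianReal_of_var_ne_zero _ one_ne_zero, integrable_withDensity_iff_integrable_smul'
      (measurable_gaussianPDF _ _) (ae_of_all _ fun _ => gaussianPDF_lt_top)] at h
    simpa only [toReal_gaussianPDF] using h
  calc Real.exp (-s ^ 2) / (2 * √(2 * Real.pi))
      = ∫ y in Set.Ioi (0 : ℝ), c * (y * Real.exp (-1 * y ^ 2)) := by
        rw [integral_const_mul, integral_Ioi_mul_exp_neg_mul_sq one_pos, hc]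
        ring
    _ ≤ ∫ y in Set.Ioi (0 : ℝ), gaussianPDFReal (-s) 1 y • max y 0 := by
        refine setIntegral_mono_on
          ((integrable_mul_exp_neg_mul_sq one_pos).const_mul c).integrableOn
          hint.integrableOn measurableSet_Ioi fun y hy => ?_
        rw [max_eq_left (le_of_lt hy), smul_eq_mul, mul_left_comm, mul_comm y]
        exact mul_le_mul_of_nonneg_right (exp_neg_sq_div_le_gaussianPDFReal s y) (le_of_lt hy)
    _ ≤ ∫ y, gaussianPDFReal (-s) 1 y • max y 0 :=
        setIntegral_le_integral hint <| ae_of_all _ fun y =>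
          mul_nonneg (gaussianPDFReal_nonneg _ _ _) (le_max_right _ _)
    _ = ∫ t, max (t - s) 0 ∂gaussianReal 0 1 := by
        rw [← integral_gaussianReal_eq_integral_smul one_ne_zero, ← zero_sub,
          ← gaussianReal_map_sub_const s, integral_map (by fun_prop) (by fun_prop)]

lemma integrable_max_abs_mul (a M : ℝ) :
    Integrable (fun t : ℝ => max (|t| * a) M) (gaussianReal 0 1) :=
  (IsGaussian.integrable_id.abs.mul_const a).sup (integrable_const M)

lemma mul_exp_neg_sq_le_integral_max_sub {a s M : ℝ} (ha : 0 ≤ a) (hM : M ≤ s * a) :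
    a * Real.exp (-s ^ 2) / 6 ≤ (∫ t, max (|t| * a) M ∂gaussianReal 0 1) - M := by
  have hmax := integrable_max_abs_mul a M
  have hexcess : Integrable (fun t : ℝ => max (t - s) 0) (gaussianReal 0 1) :=
    (IsGaussian.integrable_id.sub (integrable_const s)).sup (integrable_const 0)
  have hpi : 2 * √(2 * Real.pi) ≤ 6 := by
    have : √(2 * Real.pi) ≤ 3 := Real.sqrt_le_iff.2 ⟨by norm_num, by linarith [Real.pi_le_four]⟩
    linarith
  calc a * Real.exp (-s ^ 2) / 6
      ≤ a * (Real.exp (-s ^ 2) / (2 * √(2 * Real.pi))) := by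
        rw [mul_div_assoc]
        gcongr
    _ ≤ a * ∫ t, max (t - s) 0 ∂gaussianReal 0 1 := by
        gcongr
        exact exp_neg_sq_div_le_integral_max_sub_gaussianReal s
    _ = ∫ t, a * max (t - s) 0 ∂gaussianReal 0 1 := (integral_const_mul _ _).symm
    _ ≤ ∫ t, (max (|t| * a) M - M) ∂gaussianReal 0 1 := by
        refine integral_mono (hexcess.const_mul a) (hmax.sub (integrable_const M)) fun t => ?_
        have ht : t * a ≤ |t| * a := by gcongr; exact le_abs_self t
        rw [mul_max_of_nonneg _ _ ha, mul_zero]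
        refine max_le ?_ (sub_nonneg.2 (le_max_right _ _))
        linarith [le_max_left (|t| * a) M]
    _ = (∫ t, max (|t| * a) M ∂gaussianReal 0 1) - M := by
        rw [integral_sub hmax (integrable_const M), integral_const, probReal_univ, one_smul]

lemma le_five_div_sqrt_of_mul_exp_le {a L : ℝ} (hL : 0 < L)
    (h : a * Real.exp (-a⁻¹ ^ 2) / 6 ≤ Real.exp (-L)) : a ≤ 5 / √L := by
  -- Otherwise `L > 25 a⁻²`; one `a⁻²` cancels the exponential in `h`, and then
  -- `exp (24 a⁻²) ≥ 1 + 24 a⁻²` leaves `a + 24 / a < 6`, that is `(a - 3)² + 15 < 0`.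
  by_contra! hcon
  have ha : 0 < a := lt_trans (by positivity) hcon
  have hsL : 25 * a⁻¹ ^ 2 < L := by
    have : 5 < a * √L := (div_lt_iff₀ (Real.sqrt_pos.2 hL)).1 hcon
    have : 5 ^ 2 < a ^ 2 * L := by
      rw [← Real.sq_sqrt hL.le, ← mul_pow]
      gcongr
    rw [inv_pow, ← div_eq_mul_inv, div_lt_iff₀ (by positivity)]
    linarith
  have hexp : a * Real.exp (24 * a⁻¹ ^ 2) < 6 := by
    have hsplit : Real.exp (-a⁻¹ ^ 2) =
        Real.exp (24 * a⁻¹ ^ 2) * Real.exp (-(25 * a⁻¹ ^ 2)) := by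
      rw [← Real.exp_add]
      ring_nf
    have hlt := h.trans_lt (Real.exp_lt_exp.2 (neg_lt_neg hsL))
    rw [hsplit, ← mul_assoc, mul_div_right_comm, mul_lt_iff_lt_one_left (Real.exp_pos _)] at hlt
    linarith
  have hquad : a * (24 * a⁻¹ ^ 2 + 1) < 6 :=
    (mul_le_mul_of_nonneg_left (Real.add_one_le_exp _) ha.le).trans_lt hexp
  field_simp at hquad
  nlinarith [sq_nonneg (a - 3)]

end GaussianReal

lemma isNegInvariant_map {E F : Type*} [AddGroup E] [MeasurableSpace E] [MeasurableNeg E]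
    [AddGroup F] [MeasurableSpace F] [MeasurableNeg F] {μ : Measure E} [μ.IsNegInvariant]
    {f : E →+ F} (hf : Measurable f) : (μ.map f).IsNegInvariant := by
  refine ⟨?_⟩
  have hcomm : Neg.neg ∘ f = f ∘ Neg.neg := funext fun x => (map_neg f x).symm
  rw [Measure.neg_def, Measure.map_map measurable_neg hf, hcomm,
    ← Measure.map_map hf measurable_neg, ← Measure.neg_def, Measure.neg_eq_self]

section Seminorm

lemma two_mul_seminorm_le_add_add_sub {E : Type*} [AddCommGroup E] [Module ℝ E]
    (q : Seminorm ℝ E) (x y : E) : 2 * q x ≤ q (x + y) + q (x - y) :=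
  calc 2 * q x = q ((x + y) + (x - y)) := by
        rw [add_add_sub_cancel, ← two_smul ℝ x, map_smul_eq_mul, Real.norm_two]
    _ ≤ q (x + y) + q (x - y) := map_add_le_add q _ _

variable {E : Type*} [NormedAddCommGroup E] [NormedSpace ℝ E]

lemma seminorm_le_of_forall_norm_eq_one {q : Seminorm ℝ E} {C : ℝ} (hC : 0 ≤ C)
    (h : ∀ u, ‖u‖ = 1 → q u ≤ C) {x : E} (hx : ‖x‖ ≤ 1) : q x ≤ C := by
  obtain rfl | hx0 := eq_or_ne x 0
  · rwa [map_zero]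
  have hnorm : ‖x‖ ≠ 0 := norm_ne_zero_iff.2 hx0
  calc q x = ‖x‖ * q (‖x‖⁻¹ • x) := by
        rw [map_smul_eq_mul, norm_inv, norm_norm, mul_inv_cancel_left₀ hnorm]
    _ ≤ 1 * C := by
        gcongr
        exact h _ (norm_smul_inv_norm (𝕜 := ℝ) hx0)
    _ = C := one_mul C

lemma continuous_seminorm [FiniteDimensional ℝ E] (q : Seminorm ℝ E) : Continuous q :=
  continuousOn_univ.1 (q.convexOn.continuousOn isOpen_univ)

variable [MeasurableSpace E] [OpensMeasurableSpace E]

lemma integrable_seminorm_of_continuous {q : Seminorm ℝ E} (hq : Continuous q) {μ : Measure E}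
    (hμ : Integrable id μ) : Integrable q μ := by
  obtain ⟨C, -, hC⟩ := Seminorm.bound_of_continuous_normedSpace q hq
  refine (hμ.norm.const_mul C).mono' hq.measurable.aestronglyMeasurable (ae_of_all _ fun x => ?_)
  rw [Real.norm_of_nonneg (apply_nonneg q x)]
  exact hC x

lemma max_le_integral_seminorm_const_add [MeasurableNeg E] {q : Seminorm ℝ E}
    (hq : Continuous q) {ν : Measure E} [IsProbabilityMeasure ν] [ν.IsNegInvariant]
    (hν : Integrable id ν) (v : E) :
    max (q v) (∫ y, q y ∂ν) ≤ ∫ y, q (v + y) ∂ν := by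
  have hint : Integrable q ν := integrable_seminorm_of_continuous hq hν
  have hadd : Integrable (fun y => q (v + y)) ν := by
    refine ((integrable_const (q v)).add hint).mono' ?_ (ae_of_all _ fun y => ?_)
    · exact (hq.comp (continuous_const_add v)).measurable.aestronglyMeasurable
    · rw [Real.norm_of_nonneg (apply_nonneg q _)]
      exact map_add_le_add q v y
  have hneg : ∫ y, q (v - y) ∂ν = ∫ y, q (v + y) ∂ν := by
    simpa only [sub_eq_add_neg] using integral_neg_eq_self (fun y => q (v + y)) ν
  have hsub : Integrable (fun y => q (v - y)) ν := by
    simpa only [sub_eq_add_neg] using hadd.comp_neg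
  have hsum : ∫ y, (q (v + y) + q (v - y)) ∂ν = 2 * ∫ y, q (v + y) ∂ν := by
    rw [integral_add hadd hsub, hneg, two_mul]
  refine max_le ?_ ?_
  · have := integral_mono (integrable_const _) (hadd.add hsub)
      (two_mul_seminorm_le_add_add_sub q v)
    simp only [integral_const, probReal_univ, one_smul, Pi.add_apply] at this
    linarith
  · have := integral_mono (hint.const_mul 2) (hadd.add hsub) fun y => by
      simpa only [add_comm y v, map_sub_rev q y v, Pi.add_apply] using
        two_mul_seminorm_le_add_add_sub q y v
    simp only [integral_const_mul, Pi.add_apply] at this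
    linarith

end Seminorm

section StdGaussian

variable {E : Type*} [NormedAddCommGroup E] [InnerProductSpace ℝ E] [FiniteDimensional ℝ E]
  [MeasurableSpace E] [BorelSpace E]

instance isNegInvariant_stdGaussian :
    (ProbabilityTheory.stdGaussian E).IsNegInvariant :=
  ⟨stdGaussian_map (LinearIsometryEquiv.neg ℝ)⟩

lemma integrable_seminorm_stdGaussian (q : Seminorm ℝ E) :
    Integrable q (ProbabilityTheory.stdGaussian E) :=
  integrable_seminorm_of_continuous (continuous_seminorm q) IsGaussian.integrable_id

lemma map_inner_stdGaussian (u : E) :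
    (ProbabilityTheory.stdGaussian E).map (fun x => ⟪u, x⟫) = gaussianReal 0 (‖u‖₊ ^ 2) := by
  have h := IsGaussian.map_eq_gaussianReal (μ := ProbabilityTheory.stdGaussian E) (innerSL ℝ u)
  rw [integral_strongDual_stdGaussian, variance_dual_stdGaussian, innerSL_apply_norm,
    Real.toNNReal_pow (norm_nonneg u), norm_toNNReal] at h
  exact h

lemma integral_comp_inner_stdGaussian {F : Type*} [NormedAddCommGroup F] [NormedSpace ℝ F]
    {u : E} (hu : ‖u‖ = 1) {f : ℝ → F} (hf : Continuous f) :
    ∫ x, f ⟪u, x⟫ ∂ProbabilityTheory.stdGaussian E = ∫ t, f t ∂gaussianReal 0 1 := by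
  have hlaw := map_inner_stdGaussian u
  rw [show ‖u‖₊ = 1 from NNReal.eq hu, one_pow] at hlaw
  rw [← hlaw, integral_map (by fun_prop) hf.aestronglyMeasurable]

lemma charFun_map_starProjection_stdGaussian (K : Submodule ℝ E) (t : E) :
    charFun ((ProbabilityTheory.stdGaussian E).map K.starProjection) t =
      Complex.exp (-‖K.starProjection t‖ ^ 2 / 2) := by
  rw [← charFun_stdGaussian, charFun_apply, charFun_apply,
    integral_map (by fun_prop) (by fun_prop)]
  simp only [K.inner_starProjection_left_eq_right]

lemma map_starProjection_conv_map_starProjection_orthogonal_stdGaussian (K : Submodule ℝ E) :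
    (ProbabilityTheory.stdGaussian E).map K.starProjection ∗
      (ProbabilityTheory.stdGaussian E).map Kᗮ.starProjection =
        ProbabilityTheory.stdGaussian E := by
  refine Measure.ext_of_charFun (funext fun t => ?_)
  rw [charFun_conv, charFun_map_starProjection_stdGaussian,
    charFun_map_starProjection_stdGaussian, charFun_stdGaussian, ← Complex.exp_add,
    ← Complex.ofReal_pow ‖t‖, K.norm_sq_eq_add_norm_sq_starProjection t]
  push_cast
  ring_nf

lemma integral_max_starProjection_le_integral_seminorm (q : Seminorm ℝ E) (K : Submodule ℝ E) :
    ∫ x, max (q (K.starProjection x))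
        (∫ y, q (Kᗮ.starProjection y) ∂ProbabilityTheory.stdGaussian E)
          ∂ProbabilityTheory.stdGaussian E ≤ ∫ x, q x ∂ProbabilityTheory.stdGaussian E := by
  set γ := ProbabilityTheory.stdGaussian E
  have hq := continuous_seminorm q
  have hconv : γ.map K.starProjection ∗ γ.map Kᗮ.starProjection = γ :=
    map_starProjection_conv_map_starProjection_orthogonal_stdGaussian K
  have : (γ.map Kᗮ.starProjection).IsNegInvariant :=
    isNegInvariant_map (f := Kᗮ.starProjection.toLinearMap.toAddMonoidHom)
      Kᗮ.starProjection.continuous.measurable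
  have hint : Integrable q (γ.map K.starProjection ∗ γ.map Kᗮ.starProjection) := by
    rw [hconv]
    exact integrable_seminorm_stdGaussian q
  set c := ∫ y, q (Kᗮ.starProjection y) ∂γ
  have hcmap : c = ∫ y, q y ∂γ.map Kᗮ.starProjection := by
    rw [integral_map (by fun_prop) hq.measurable.aestronglyMeasurable]
  have hmax : Integrable (fun x => max (q x) c) (γ.map K.starProjection) :=
    (integrable_seminorm_of_continuous hq IsGaussian.integrable_id).sup (integrable_const c)
  have hinner : Integrable (fun x => ∫ y, q (x + y) ∂γ.map Kᗮ.starProjection)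
      (γ.map K.starProjection) := by
    simpa only [Real.norm_of_nonneg (apply_nonneg q _)] using
      ((integrable_conv_iff hint.aestronglyMeasurable).1 hint).2
  calc ∫ x, max (q (K.starProjection x)) c ∂γ
      = ∫ x, max (q x) c ∂γ.map K.starProjection :=
        (integral_map (by fun_prop) hmax.aestronglyMeasurable).symm
    _ ≤ ∫ x, ∫ y, q (x + y) ∂γ.map Kᗮ.starProjection ∂γ.map K.starProjection :=
        integral_mono hmax hinner fun x => hcmap ▸
          max_le_integral_seminorm_const_add hq IsGaussian.integrable_id x
    _ = ∫ x, q x ∂γ := by rw [← integral_conv hint, hconv]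

lemma integral_max_abs_mul_le_integral_seminorm (q : Seminorm ℝ E) {u : E} (hu : ‖u‖ = 1) :
    ∫ t, max (|t| * q u)
        (∫ x, q ((ℝ ∙ u)ᗮ.starProjection x) ∂ProbabilityTheory.stdGaussian E) ∂gaussianReal 0 1 ≤
      ∫ x, q x ∂ProbabilityTheory.stdGaussian E := by
  set M := ∫ x, q ((ℝ ∙ u)ᗮ.starProjection x) ∂ProbabilityTheory.stdGaussian E with hM
  have h := integral_max_starProjection_le_integral_seminorm q (ℝ ∙ u)
  simp only [Submodule.starProjection_unit_singleton ℝ hu, map_smul_eq_mul, Real.norm_eq_abs,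
    ← hM] at h
  rwa [integral_comp_inner_stdGaussian hu (f := fun t => max (|t| * q u) M) (by fun_prop)] at h

lemma seminorm_le_five_div_sqrt (q : Seminorm ℝ E)
    (hq : ∫ x, q x ∂ProbabilityTheory.stdGaussian E ≤ 1) {u : E} (hu : ‖u‖ = 1) {L : ℝ}
    (hL : 0 < L) (hproj : 1 - Real.exp (-L) ≤
      ∫ x, q ((ℝ ∙ u)ᗮ.starProjection x) ∂ProbabilityTheory.stdGaussian E) :
    q u ≤ 5 / √L := by
  obtain hzero | hpos := (apply_nonneg q u).eq_or_lt
  · rw [← hzero]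
    positivity
  set M := ∫ x, q ((ℝ ∙ u)ᗮ.starProjection x) ∂ProbabilityTheory.stdGaussian E
  have hmax := (integral_max_abs_mul_le_integral_seminorm q hu).trans hq
  have hM : M ≤ (q u)⁻¹ * q u := by
    rw [inv_mul_cancel₀ hpos.ne']
    refine le_trans ?_ hmax
    simpa only [integral_const, probReal_univ, one_smul] using
      integral_mono (integrable_const M) (integrable_max_abs_mul (q u) M) fun t => le_max_right _ _
  have := mul_exp_neg_sq_le_integral_max_sub hpos.le hM
  exact le_five_div_sqrt_of_mul_exp_le hL (by linarith)

lemma integral_seminorm_stdGaussian_le {ι : Type*} [Fintype ι] (q : Seminorm ℝ E)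
    (b : OrthonormalBasis ι ℝ E) :
    ∫ x, q x ∂ProbabilityTheory.stdGaussian E ≤ √(2 / Real.pi) * ∑ i, q (b i) := by
  have hle (x : E) : q x ≤ ∑ i, |⟪b i, x⟫| * q (b i) :=
    calc q x = q (∑ i, ⟪b i, x⟫ • b i) := by rw [b.sum_repr' x]
      _ ≤ ∑ i, q (⟪b i, x⟫ • b i) :=
        Finset.le_sum_of_subadditive q (map_zero q).le (map_add_le_add q) _ _
      _ = ∑ i, |⟪b i, x⟫| * q (b i) := by simp only [map_smul_eq_mul, Real.norm_eq_abs]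
  have hint (i : ι) : Integrable (fun x => |⟪b i, x⟫| * q (b i))
      (ProbabilityTheory.stdGaussian E) :=
    (IsGaussian.integrable_dual _ (innerSL ℝ (b i))).abs.mul_const _
  calc ∫ x, q x ∂ProbabilityTheory.stdGaussian E
      ≤ ∫ x, ∑ i, |⟪b i, x⟫| * q (b i) ∂ProbabilityTheory.stdGaussian E :=
        integral_mono (integrable_seminorm_stdGaussian q)
          (integrable_finsetSum _ fun i _ => hint i) hle
    _ = ∑ i, √(2 / Real.pi) * q (b i) := by
        rw [integral_finsetSum _ fun i _ => hint i]
        refine Finset.sum_congr rfl fun i _ => ?_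
        rw [integral_mul_const, integral_comp_inner_stdGaussian (b.orthonormal.1 i)
          continuous_abs, integral_abs_gaussianReal]
    _ = √(2 / Real.pi) * ∑ i, q (b i) := (Finset.mul_sum _ _ _).symm

lemma sqrt_pi_div_two_div_finrank_le {q : Seminorm ℝ E}
    (hq : 1 ≤ ∫ x, q x ∂ProbabilityTheory.stdGaussian E) {A : ℝ} (hA : ∀ u, ‖u‖ = 1 → q u ≤ A) :
    √(Real.pi / 2) / Module.finrank ℝ E ≤ A := by
  set b := stdOrthonormalBasis ℝ E
  have hsum : ∑ i, q (b i) ≤ Module.finrank ℝ E * A := by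
    simpa using Finset.sum_le_card_nsmul Finset.univ (fun i => q (b i)) A fun i _ =>
      hA (b i) (b.orthonormal.1 i)
  have hone : 1 ≤ √(2 / Real.pi) * (Module.finrank ℝ E * A) :=
    hq.trans <| (integral_seminorm_stdGaussian_le q b).trans (by gcongr)
  have hdim : 0 < Module.finrank ℝ E := by
    refine Nat.pos_of_ne_zero fun h => ?_
    norm_num [h] at hone
  rw [← inv_div, Real.sqrt_inv, le_inv_mul_iff₀ (by positivity), mul_one] at hone
  rwa [div_le_iff₀' (by exact_mod_cast hdim)]

end StdGaussian

section Coordinates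

variable {ι : Type*} [Fintype ι]

lemma sum_sq_le_one_iff_norm_toLp_le_one {x : ι → ℝ} :
    ∑ i, x i ^ 2 ≤ 1 ↔ ‖(WithLp.toLp 2 x : EuclideanSpace ℝ ι)‖ ≤ 1 := by
  rw [← sq_le_one_iff₀ (norm_nonneg _), EuclideanSpace.real_norm_sq_eq]

/-- A seminorm on `ι → ℝ`, viewed as a seminorm on the Euclidean space `ℓ₂^ι`. -/
noncomputable def euclideanSeminorm (q : Seminorm ℝ (ι → ℝ)) : Seminorm ℝ (EuclideanSpace ℝ ι) :=
  q.comp (WithLp.linearEquiv 2 ℝ (ι → ℝ)).toLinearMap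

lemma seminorm_le_iSup_of_sum_sq_le_one (q : Seminorm ℝ (ι → ℝ)) {x : ι → ℝ}
    (hx : ∑ i, x i ^ 2 ≤ 1) : q x ≤ ⨆ y : {y : ι → ℝ // ∑ i, y i ^ 2 ≤ 1}, q y.1 := by
  obtain ⟨C, hCpos, hC⟩ := Seminorm.bound_of_continuous_normedSpace (euclideanSeminorm q)
    (continuous_seminorm _)
  refine le_ciSup (f := fun y : {y : ι → ℝ // ∑ i, y i ^ 2 ≤ 1} => q y.1) ⟨C, ?_⟩ ⟨x, hx⟩
  rintro _ ⟨⟨y, hy⟩, rfl⟩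
  exact (hC (WithLp.toLp 2 y)).trans
    (mul_le_of_le_one_right hCpos.le (sum_sq_le_one_iff_norm_toLp_le_one.1 hy))

/-- The orthogonal projection of `ℓ₂^ι` onto `K`, as an endomorphism of the coordinate space
`ι → ℝ`. -/
noncomputable def coordProj (K : Submodule ℝ (EuclideanSpace ℝ ι)) : (ι → ℝ) →ₗ[ℝ] (ι → ℝ) :=
  (WithLp.linearEquiv 2 ℝ (ι → ℝ)).conj K.starProjection.toLinearMap

variable (K : Submodule ℝ (EuclideanSpace ℝ ι))

lemma coordProj_apply (x : ι → ℝ) :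
    coordProj K x = WithLp.ofLp (K.starProjection (WithLp.toLp 2 x)) := rfl

lemma coordProj_comp_self : coordProj K ∘ₗ coordProj K = coordProj K := by
  rw [coordProj, ← LinearEquiv.conj_comp]
  exact congrArg _ (ContinuousLinearMap.IsIdempotentElem.toLinearMap
    K.isIdempotentElem_starProjection)

lemma sum_coordProj_mul (x y : ι → ℝ) :
    ∑ i, coordProj K x i * y i = ∑ i, x i * coordProj K y i := by
  have h := K.inner_starProjection_left_eq_right (WithLp.toLp 2 x) (WithLp.toLp 2 y)
  simpa [PiLp.inner_apply, mul_comm, coordProj_apply] using h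

lemma finrank_range_coordProj :
    Module.finrank ℝ (LinearMap.range (coordProj K)) = Module.finrank ℝ K := by
  rw [coordProj, LinearEquiv.conj_apply, LinearMap.range_comp_of_range_eq_top _
    (LinearEquiv.range _), LinearMap.range_comp, LinearEquiv.finrank_map_eq]
  exact congrArg (fun L : Submodule ℝ _ => Module.finrank ℝ L) K.range_starProjection

end Coordinates

lemma integral_stdGaussian_eq_integral_ofLp {F : Type*} [NormedAddCommGroup F] [NormedSpace ℝ F]
    (m : ℕ) (f : (Fin m → ℝ) → F) : ∫ x, f x ∂stdGaussian m =
      ∫ y, f (WithLp.ofLp y) ∂ProbabilityTheory.stdGaussian (EuclideanSpace ℝ (Fin m)) := by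
  rw [← map_pi_eq_stdGaussian]
  exact ((MeasurableEquiv.toLp 2 (Fin m → ℝ)).measurableEmbedding.integral_map
    (fun y => f (WithLp.ofLp y))).symm

lemma finrank_range_coordProj_orthogonal_span_singleton {m : ℕ}
    {u : EuclideanSpace ℝ (Fin m)} (hu : u ≠ 0) :
    Module.finrank ℝ (LinearMap.range (coordProj (ℝ ∙ u)ᗮ)) + 1 = m := by
  rw [finrank_range_coordProj, ← finrank_span_singleton (K := ℝ) hu, add_comm,
    Submodule.finrank_add_finrank_orthogonal, finrank_euclideanSpace_fin]

theorem stmt3_general (m : ℕ) (hm : 2 ≤ m) (q : Seminorm ℝ (Fin m → ℝ))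
    (hq : ∫ x, q x ∂stdGaussian m = 1) :
    ((∀ P : (Fin m → ℝ) →ₗ[ℝ] (Fin m → ℝ), P ∘ₗ P = P →
        (∀ x y : Fin m → ℝ, ∑ i, P x i * y i = ∑ i, x i * P y i) →
        Module.finrank ℝ (LinearMap.range P) + 1 = m →
        (Module.finrank ℝ (LinearMap.range P) : ℝ) / m ≤ ∫ x, q (P x) ∂stdGaussian m) →
      (⨆ x : {x : Fin m → ℝ // ∑ i, x i ^ 2 ≤ 1}, q x.1) ≤ 5 / √(Real.log m)) ∧
    √(Real.pi / 2) / m ≤ ⨆ x : {x : Fin m → ℝ // ∑ i, x i ^ 2 ≤ 1}, q x.1 := by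
  have hm1 : (1 : ℝ) < m := by exact_mod_cast hm
  rw [integral_stdGaussian_eq_integral_ofLp] at hq
  refine ⟨fun hproj => ?_, ?_⟩
  · have hunit (u : EuclideanSpace ℝ (Fin m)) (hu : ‖u‖ = 1) :
        euclideanSeminorm q u ≤ 5 / √(Real.log m) := by
      have hrank := finrank_range_coordProj_orthogonal_span_singleton
        (norm_ne_zero_iff.1 (hu ▸ one_ne_zero))
      have hcodim : (Module.finrank ℝ (LinearMap.range (coordProj (ℝ ∙ u)ᗮ)) : ℝ) = m - 1 :=
        eq_sub_of_add_eq (by exact_mod_cast hrank)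
      have hmass := hproj _ (coordProj_comp_self _) (sum_coordProj_mul _) hrank
      rw [hcodim, integral_stdGaussian_eq_integral_ofLp,
        sub_div, div_self (by positivity)] at hmass
      refine seminorm_le_five_div_sqrt _ hq.le hu (Real.log_pos hm1) ?_
      rwa [Real.exp_neg, Real.exp_log (by positivity), inv_eq_one_div]
    have : Nonempty {x : Fin m → ℝ // ∑ i, x i ^ 2 ≤ 1} := ⟨⟨0, by simp⟩⟩
    exact ciSup_le fun x => seminorm_le_of_forall_norm_eq_one (by positivity) hunit
      (sum_sq_le_one_iff_norm_toLp_le_one.1 x.2)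
  · have h := sqrt_pi_div_two_div_finrank_le (q := euclideanSeminorm q) hq.ge fun u hu =>
      seminorm_le_iSup_of_sum_sq_le_one q (sum_sq_le_one_iff_norm_toLp_le_one.2 hu.le)
    rwa [finrank_euclideanSpace_fin] at h

theorem stmt3 (m : ℕ) (hm : 2 ≤ m)
    (nF : (Fin m → ℝ) → ℝ)
    (hn0 : ∀ x, nF x = 0 ↔ x = 0)
    (hns : ∀ (c : ℝ) (x), nF (c • x) = |c| * nF x)
    (hna : ∀ x y, nF (x + y) ≤ nF x + nF y)
    (J : (Fin m → ℝ) →ₗ[ℝ] (Fin m → ℝ))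
    (hJ1 : (∫ x, nF (J x) ∂stdGaussian m) = 1) :
    ((∀ P : (Fin m → ℝ) →ₗ[ℝ] (Fin m → ℝ), P ∘ₗ P = P →
        (∀ x y : Fin m → ℝ, ∑ i, P x i * y i = ∑ i, x i * P y i) →
        (Module.finrank ℝ (LinearMap.range P) : ℝ) / m ≤
          ∫ x, nF (J (P x)) ∂stdGaussian m) →
      opNormF m nF J ≤ 5 / Real.sqrt (Real.log m)) ∧
    Real.sqrt (Real.pi / 2) / m ≤ opNormF m nF J := by
  obtain ⟨hupper, hlower⟩ := stmt3_general m hm ((Seminorm.of nF hna hns).comp J) hJ1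
  exact ⟨fun hP => hupper fun P hidem hsymm _ => hP P hidem hsymm, hlower⟩
end

section
/- Let n, m ≥ 1, let G be a real normed space, and let S : ℝ^m → G be linear, where ℝ^m carries the Euclidean norm ‖·‖₂. Let N be a random n×m matrix with entries N_{ij} = X_{ij}/√n, where the X_{ij} are independent standard normal random variables, and let X be a standard Gaussian vector in ℝ^m. Then for every x ∈ ℝ^m, 𝔼‖S x − S(Nᵀ N x)‖_G ≤ (2/√n) · ‖x‖₂ · 𝔼‖S X‖_G. In particular, the linear rank-n Monte Carlo method A^ω := S Nᵀ N satisfies sup_{‖x‖₂ ≤ 1} 𝔼‖S x − A^ω(x)‖_G ≤ (2/√n) · 𝔼‖S X‖_G. -/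
open MeasureTheory ProbabilityTheory

/-!
The sampling error is, up to the factor `1 / n`, a centred Gaussian chaos `∫ B v v - B u u`, where
`B u v = ∑ i, L (v i) • u i`. Integrating out `v` in `B (u + v) (v - u)` leaves exactly this chaos,
so Jensen's inequality bounds its mean norm by that of `B (u + v) (v - u)`. Rotating the pair
`(u, v)` by `π / 4` turns the latter into `2 • B u v`, in which `u` and `v` are independent. For
fixed `v`, `B u v` is distributed as `√(∑ i, L (v i) ^ 2)` times a single Gaussian vector, and the
mean of this factor is at most `√n * √Var[L]`.
-/

section Decoupling

variable {E F G : Type*} [NormedAddCommGroup E] [NormedSpace ℝ E]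
  [NormedAddCommGroup F] [NormedSpace ℝ F] [NormedAddCommGroup G] [NormedSpace ℝ G]

lemma norm_map_integral_le [CompleteSpace E] {Ω : Type*} [MeasurableSpace Ω] {μ : Measure Ω}
    (S : E →L[ℝ] G) {f : Ω → E} (hf : Integrable f μ) :
    ‖S (∫ ω, f ω ∂μ)‖ ≤ ∫ ω, ‖S (f ω)‖ ∂μ := by
  -- Bochner integrals in `G` itself would take the junk value `0` when `G` is not complete.
  let T : E →L[ℝ] UniformSpace.Completion G := UniformSpace.Completion.toComplL.comp S
  have hT : ∀ y, ‖T y‖ = ‖S y‖ := fun y => UniformSpace.Completion.norm_coe (S y)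
  calc ‖S (∫ ω, f ω ∂μ)‖ = ‖∫ ω, T (f ω) ∂μ‖ := by rw [T.integral_comp_comm hf, hT]
    _ ≤ ∫ ω, ‖T (f ω)‖ ∂μ := norm_integral_le_integral_norm _
    _ = ∫ ω, ‖S (f ω)‖ ∂μ := by simp only [hT]

lemma bilin_add_sub_eq_two_smul_bilin_rotation (B : F →L[ℝ] F →L[ℝ] E) (p : F × F) :
    B (p.1 + p.2) (p.2 - p.1) =
      (2 : ℝ) • B (ContinuousLinearMap.rotation (Real.pi / 4) p).1
        (ContinuousLinearMap.rotation (Real.pi / 4) p).2 := by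
  have h_sq : 2 * (√2 / 2) * (√2 / 2) = (1 : ℝ) := by
    linarith [Real.mul_self_sqrt (zero_le_two : (0 : ℝ) ≤ 2)]
  have h_fst : (√2 / 2) • p.1 + (√2 / 2) • p.2 = (√2 / 2) • (p.1 + p.2) := (smul_add ..).symm
  have h_snd : -(√2 / 2) • p.1 + (√2 / 2) • p.2 = (√2 / 2) • (p.2 - p.1) := by module
  rw [ContinuousLinearMap.rotation_apply, Real.cos_pi_div_four, Real.sin_pi_div_four, h_fst, h_snd,
    map_smul, map_smul, smul_apply, smul_smul, smul_smul, h_sq, one_smul]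

variable [MeasurableSpace F] [BorelSpace F] [SecondCountableTopology F] [CompleteSpace F]
  (ν : Measure F) [IsGaussian ν]

lemma integrable_bilin_self (B : F →L[ℝ] F →L[ℝ] E) :
    Integrable (fun u => B u u) ν :=
  memLp_one_iff_integrable.1
    (B.memLp_of_bilin 1 IsGaussian.memLp_two_id IsGaussian.memLp_two_id)

lemma integrable_bilin_prod (B : F →L[ℝ] F →L[ℝ] E) :
    Integrable (fun p : F × F => B p.1 p.2) (ν.prod ν) :=
  integrable_bilin_self (ν.prod ν) (B.bilinearComp (.fst ℝ F F) (.snd ℝ F F))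

lemma integrable_bilin_add_sub_prod (B : F →L[ℝ] F →L[ℝ] E) :
    Integrable (fun p : F × F => B (p.1 + p.2) (p.2 - p.1)) (ν.prod ν) :=
  integrable_bilin_self (ν.prod ν)
    (B.bilinearComp (.fst ℝ F F + .snd ℝ F F)
      (ContinuousLinearMap.snd ℝ F F - ContinuousLinearMap.fst ℝ F F))

lemma integrable_bilin_add_sub (B : F →L[ℝ] F →L[ℝ] E) (u : F) :
    Integrable (fun v => B (u + v) (v - u)) ν :=
  memLp_one_iff_integrable.1 (B.memLp_of_bilin 1 ((memLp_const u).add IsGaussian.memLp_two_id)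
    (IsGaussian.memLp_two_id.sub (memLp_const u)))

variable {ν}

lemma integral_bilin_add_sub [CompleteSpace E] (hν : ∫ v, v ∂ν = 0) (B : F →L[ℝ] F →L[ℝ] E)
    (u : F) : ∫ v, B (u + v) (v - u) ∂ν = ∫ v, B v v ∂ν - B u u := by
  let cross : F →L[ℝ] E := B u - B.flip u
  have h_expand : ∀ v, B (u + v) (v - u) = B v v - B u u + cross v := fun v => by
    simp only [cross, map_add, map_sub, ContinuousLinearMap.flip_apply, add_apply, sub_apply]
    abel
  have h_cross : ∫ v, cross v ∂ν = 0 := by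
    rw [cross.integral_comp_id_comm IsGaussian.integrable_id, hν, map_zero]
  have h_cross_int : Integrable (fun v => cross v) ν :=
    cross.integrable_comp IsGaussian.integrable_id
  have h_self := integrable_bilin_self ν B
  have h_diff : Integrable (fun v => B v v - B u u) ν := h_self.sub (integrable_const _)
  calc ∫ v, B (u + v) (v - u) ∂ν = ∫ v, (B v v - B u u) + cross v ∂ν := by simp_rw [h_expand]
    _ = ∫ v, B v v - B u u ∂ν := by
      rw [integral_add h_diff h_cross_int, h_cross, add_zero]
    _ = ∫ v, B v v ∂ν - B u u := by
      rw [integral_sub h_self (integrable_const _), integral_const, probReal_univ, one_smul]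

lemma integral_norm_bilin_add_sub (hν : ∫ v, v ∂ν = 0) (B : F →L[ℝ] F →L[ℝ] E)
    (S : E →L[ℝ] G) :
    ∫ p, ‖S (B (p.1 + p.2) (p.2 - p.1))‖ ∂ν.prod ν = 2 * ∫ p, ‖S (B p.1 p.2)‖ ∂ν.prod ν := by
  have h_rot : (ν.prod ν).map (ContinuousLinearMap.rotation (Real.pi / 4)) = ν.prod ν :=
    IsGaussian.map_rotation_eq_self hν _
  have h_meas : Continuous fun p : F × F => ‖S (B p.1 p.2)‖ := by fun_prop
  conv_rhs => rw [← h_rot, integral_map (by fun_prop) h_meas.aestronglyMeasurable]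
  simp_rw [bilin_add_sub_eq_two_smul_bilin_rotation, map_smul, norm_smul]
  rw [integral_const_mul, Real.norm_two]

theorem integral_norm_map_integral_bilin_self_sub_le [CompleteSpace E] (hν : ∫ v, v ∂ν = 0)
    (B : F →L[ℝ] F →L[ℝ] E) (S : E →L[ℝ] G) :
    ∫ u, ‖S (∫ v, B v v ∂ν - B u u)‖ ∂ν ≤ 2 * ∫ p, ‖S (B p.1 p.2)‖ ∂ν.prod ν := by
  have h_prod : Integrable (fun p : F × F => ‖S (B (p.1 + p.2) (p.2 - p.1))‖) (ν.prod ν) :=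
    (S.integrable_comp (integrable_bilin_add_sub_prod ν B)).norm
  have h_diag : Integrable (fun u => ‖S (∫ v, B v v ∂ν - B u u)‖) ν :=
    (S.integrable_comp ((integrable_const _).sub (integrable_bilin_self ν B))).norm
  calc ∫ u, ‖S (∫ v, B v v ∂ν - B u u)‖ ∂ν
      ≤ ∫ u, ∫ v, ‖S (B (u + v) (v - u))‖ ∂ν ∂ν :=
        integral_mono h_diag h_prod.integral_prod_left fun u => by
          simpa only [integral_bilin_add_sub hν] using
            norm_map_integral_le S (integrable_bilin_add_sub ν B u)
    _ = ∫ p, ‖S (B (p.1 + p.2) (p.2 - p.1))‖ ∂ν.prod ν := (integral_prod _ h_prod).symm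
    _ = 2 * ∫ p, ‖S (B p.1 p.2)‖ ∂ν.prod ν := integral_norm_bilin_add_sub hν B S

end Decoupling

section GaussianSums

/-- The `E`-valued bilinear form `(u, v) ↦ ∑ i, L (v i) • u i` on samples. Its diagonal is the
unnormalised empirical counterpart of `∫ y, L y • y ∂μ`; its two arguments are separated so that
independent samples can be substituted for them. -/
noncomputable def sampleForm (ι : Type*) {E : Type*} [Fintype ι] [NormedAddCommGroup E]
    [NormedSpace ℝ E] (L : StrongDual ℝ E) : (ι → E) →L[ℝ] (ι → E) →L[ℝ] E :=
  ∑ i, (ContinuousLinearMap.lsmul ℝ ℝ).flip.bilinearComp (.proj i) (L.comp (.proj i))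

lemma sampleForm_apply {ι E : Type*} [Fintype ι] [NormedAddCommGroup E] [NormedSpace ℝ E]
    (L : StrongDual ℝ E) (u v : ι → E) : sampleForm ι L u v = ∑ i, L (v i) • u i := by
  simp [sampleForm]

variable {ι E : Type*} [Fintype ι] [NormedAddCommGroup E] [NormedSpace ℝ E] [MeasurableSpace E]
  [BorelSpace E] [SecondCountableTopology E] [CompleteSpace E]

instance isGaussian_pi {X : ι → Type*} [∀ i, NormedAddCommGroup (X i)]
    [∀ i, NormedSpace ℝ (X i)] [∀ i, MeasurableSpace (X i)] [∀ i, BorelSpace (X i)]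
    [∀ i, SecondCountableTopology (X i)] [∀ i, CompleteSpace (X i)]
    (μ : ∀ i, Measure (X i)) [∀ i, IsGaussian (μ i)] : IsGaussian (Measure.pi μ) := by
  have h_indep : iIndepFun (fun i (ω : ∀ i, X i) => ω i) (Measure.pi μ) :=
    iIndepFun_pi (X := fun _ => id) fun _ => aemeasurable_id
  have h_eval (i : ι) : HasGaussianLaw (fun ω : ∀ i, X i => ω i) (Measure.pi μ) :=
    ⟨by rw [(measurePreserving_eval μ i).map_eq]; infer_instance⟩
  simpa using (iIndepFun.hasGaussianLaw h_eval h_indep).isGaussian_map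

lemma integral_pi_eq_zero {X : ι → Type*} [∀ i, NormedAddCommGroup (X i)]
    [∀ i, NormedSpace ℝ (X i)] [∀ i, MeasurableSpace (X i)] [∀ i, BorelSpace (X i)]
    [∀ i, SecondCountableTopology (X i)] [∀ i, CompleteSpace (X i)]
    {μ : ∀ i, Measure (X i)} [∀ i, IsGaussian (μ i)] (hμ : ∀ i, ∫ y, y ∂μ i = 0) :
    ∫ ω, ω ∂Measure.pi μ = 0 := by
  ext i
  have (i : ι) : Integrable (fun ω : ∀ i, X i => ω i) (Measure.pi μ) :=
    integrable_eval IsGaussian.integrable_id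
  rw [eval_integral this, integral_eval, hμ, Pi.zero_apply]

lemma gaussian_eq_of_variance_eq {μ ν : Measure E} [IsGaussian μ] [IsGaussian ν]
    (hμ : ∫ y, y ∂μ = 0) (hν : ∫ y, y ∂ν = 0)
    (h : ∀ L : StrongDual ℝ E, Var[L; μ] = Var[L; ν]) : μ = ν := by
  refine Measure.ext_of_charFunDual (funext fun L => ?_)
  rw [IsGaussian.charFunDual_eq_of_integral_eq_zero hμ,
    IsGaussian.charFunDual_eq_of_integral_eq_zero hν, h]

variable {μ : Measure E} [IsGaussian μ]

lemma map_sum_smul_pi_eq (hμ : ∫ y, y ∂μ = 0) (c : ι → ℝ) :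
    (Measure.pi fun _ => μ).map (fun ω => ∑ i, c i • ω i) =
      μ.map (fun y => √(∑ i, c i ^ 2) • y) := by
  let T : (ι → E) →L[ℝ] E := ∑ i, c i • .proj i
  let U : E →L[ℝ] E := √(∑ i, c i ^ 2) • .id ℝ E
  have hT : (fun ω : ι → E => ∑ i, c i • ω i) = T := by ext ω; simp [T]
  have hU : (fun y : E => √(∑ i, c i ^ 2) • y) = U := by ext y; simp [U]
  rw [hT, hU]
  have hT_mean : ∫ y, y ∂(Measure.pi fun _ => μ).map T = 0 := by
    rw [T.integral_id_map IsGaussian.integrable_id, integral_pi_eq_zero fun _ => hμ, map_zero]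
  have hU_mean : ∫ y, y ∂μ.map U = 0 := by
    rw [U.integral_id_map IsGaussian.integrable_id, hμ, map_zero]
  refine gaussian_eq_of_variance_eq hT_mean hU_mean fun L => ?_
  have hLT : L ∘ T = ∑ i, fun ω : ι → E => c i * L (ω i) := by ext ω; simp [T]
  have hLU : L ∘ U = fun y => √(∑ i, c i ^ 2) * L y := by ext y; simp [U]
  have h_memLp (i : ι) : MemLp (fun y => c i * L y) 2 μ :=
    (IsGaussian.memLp_dual μ L 2 (by simp)).const_mul (c i)
  rw [variance_map (by fun_prop) (by fun_prop), variance_map (by fun_prop) (by fun_prop), hLT, hLU,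
    variance_sum_pi h_memLp, variance_const_mul]
  simp_rw [variance_const_mul]
  rw [Real.sq_sqrt (by positivity), Finset.sum_mul]

lemma integral_norm_map_sum_smul_pi {G : Type*} [NormedAddCommGroup G] [NormedSpace ℝ G]
    (hμ : ∫ y, y ∂μ = 0) (S : E →L[ℝ] G) (c : ι → ℝ) :
    ∫ ω, ‖S (∑ i, c i • ω i)‖ ∂Measure.pi (fun _ => μ) = √(∑ i, c i ^ 2) * ∫ y, ‖S y‖ ∂μ := by
  have h_meas {ρ : Measure E} : AEStronglyMeasurable (fun y => ‖S y‖) ρ :=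
    S.continuous.norm.aestronglyMeasurable
  rw [← integral_map (φ := fun ω : ι → E => ∑ i, c i • ω i) (f := fun y => ‖S y‖)
    (Continuous.aemeasurable (by fun_prop)) h_meas, map_sum_smul_pi_eq hμ,
    integral_map (by fun_prop) h_meas]
  simp_rw [map_smul, norm_smul]
  rw [integral_const_mul, Real.norm_of_nonneg (Real.sqrt_nonneg _)]

lemma integral_sqrt_le_sqrt_integral {Ω : Type*} [MeasurableSpace Ω] {P : Measure Ω}
    [IsProbabilityMeasure P] {f : Ω → ℝ} (hf₀ : 0 ≤ f) (hf : Integrable f P) :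
    ∫ ω, √(f ω) ∂P ≤ √(∫ ω, f ω ∂P) := by
  have h_memLp : MemLp (fun ω => √(f ω)) 2 P := by
    rw [memLp_two_iff_integrable_sq (by fun_prop)]
    simpa only [Real.sq_sqrt (hf₀ _)] using hf
  have h_var := variance_nonneg (fun ω => √(f ω)) P
  rw [variance_eq_sub h_memLp] at h_var
  simp only [Pi.pow_apply, Real.sq_sqrt (hf₀ _), sub_nonneg] at h_var
  exact Real.le_sqrt_of_sq_le h_var

lemma integral_sq_dual_eq_variance (hμ : ∫ y, y ∂μ = 0) (L : StrongDual ℝ E) :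
    ∫ y, L y ^ 2 ∂μ = Var[L; μ] := by
  have h_mean : ∫ y, L y ∂μ = 0 := by rw [IsGaussian.integral_dual, hμ, map_zero]
  rw [variance_of_integral_eq_zero (by fun_prop) h_mean]

variable (μ) in
lemma integrable_dual_smul_self (L : StrongDual ℝ E) :
    Integrable (fun y => L y • y) μ :=
  integrable_bilin_self μ ((ContinuousLinearMap.lsmul ℝ ℝ).comp L)

lemma dual_integral_dual_smul_self (hμ : ∫ y, y ∂μ = 0) (L : StrongDual ℝ E) :
    L (∫ y, L y • y ∂μ) = Var[L; μ] := by
  rw [← L.integral_comp_comm (integrable_dual_smul_self μ L), ← integral_sq_dual_eq_variance hμ]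
  simp only [map_smul, smul_eq_mul, sq]

lemma integral_sqrt_sum_sq_le (hμ : ∫ y, y ∂μ = 0) (L : StrongDual ℝ E) :
    ∫ ω, √(∑ i, L (ω i) ^ 2) ∂Measure.pi (fun _ : ι => μ) ≤ √(Fintype.card ι) * √Var[L; μ] := by
  have h_int (i : ι) : Integrable (fun ω : ι → E => L (ω i) ^ 2) (Measure.pi fun _ => μ) :=
    integrable_comp_eval (μ := fun _ : ι => μ) (f := fun y => L y ^ 2)
      (IsGaussian.memLp_dual μ L 2 (by simp)).integrable_sq
  have h_eval (i : ι) : ∫ ω, L (ω i) ^ 2 ∂Measure.pi (fun _ : ι => μ) = Var[L; μ] :=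
    (integral_comp_eval (μ := fun _ : ι => μ) (f := fun y => L y ^ 2) (by fun_prop)).trans
      (integral_sq_dual_eq_variance hμ L)
  calc ∫ ω, √(∑ i, L (ω i) ^ 2) ∂Measure.pi (fun _ : ι => μ)
      ≤ √(∫ ω, ∑ i, L (ω i) ^ 2 ∂Measure.pi (fun _ : ι => μ)) :=
        integral_sqrt_le_sqrt_integral (fun ω => by positivity)
          (integrable_finsetSum _ fun i _ => h_int i)
    _ = √(Fintype.card ι * Var[L; μ]) := by
        rw [integral_finsetSum _ fun i _ => h_int i]
        simp [h_eval]
    _ = √(Fintype.card ι) * √Var[L; μ] := Real.sqrt_mul (by positivity) _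

lemma integral_sampleForm_self (L : StrongDual ℝ E) :
    ∫ ω, sampleForm ι L ω ω ∂Measure.pi (fun _ => μ) =
      (Fintype.card ι : ℝ) • ∫ y, L y • y ∂μ := by
  have h_int := integrable_dual_smul_self μ L
  have h_int_eval (i : ι) : Integrable (fun ω : ι → E => L (ω i) • ω i) (Measure.pi fun _ => μ) :=
    integrable_comp_eval (μ := fun _ : ι => μ) (f := fun y => L y • y) h_int
  have h_eval (i : ι) :
      ∫ ω, L (ω i) • ω i ∂Measure.pi (fun _ : ι => μ) = ∫ y, L y • y ∂μ :=
    integral_comp_eval (μ := fun _ : ι => μ) (f := fun y => L y • y) h_int.aestronglyMeasurable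
  simp_rw [sampleForm_apply]
  rw [integral_finsetSum _ fun i _ => h_int_eval i]
  simp [h_eval, Nat.cast_smul_eq_nsmul]

variable {G : Type*} [NormedAddCommGroup G] [NormedSpace ℝ G]

lemma integral_norm_map_sampleForm_le (hμ : ∫ y, y ∂μ = 0) (S : E →L[ℝ] G) (L : StrongDual ℝ E) :
    ∫ p, ‖S (sampleForm ι L p.1 p.2)‖
        ∂(Measure.pi fun _ => μ).prod (Measure.pi fun _ => μ) ≤
      √(Fintype.card ι) * √Var[L; μ] * ∫ y, ‖S y‖ ∂μ := by
  have h_int := (S.integrable_comp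
    (integrable_bilin_prod (Measure.pi fun _ => μ) (sampleForm ι L))).norm
  rw [integral_prod_symm _ h_int]
  simp_rw [sampleForm_apply, integral_norm_map_sum_smul_pi hμ]
  rw [integral_mul_const]
  gcongr
  exact integral_sqrt_sum_sq_le hμ L

/-- `∫ y, L y • y ∂μ` is the covariance operator of `μ` at `L`; for the standard Gaussian measure
and `L = ⟨x, ·⟩` it is `x`. -/
theorem stmt4_general [Nonempty ι] (hμ : ∫ y, y ∂μ = 0) (S : E →L[ℝ] G) (L : StrongDual ℝ E) :
    ∫ ω, ‖S (∫ y, L y • y ∂μ) - S ((1 / (Fintype.card ι : ℝ)) • ∑ i, L (ω i) • ω i)‖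
        ∂Measure.pi (fun _ : ι => μ) ≤
      2 / √(Fintype.card ι) * √Var[L; μ] * ∫ y, ‖S y‖ ∂μ := by
  let n : ℝ := Fintype.card ι
  have hn : 0 < n := by simp [n, Fintype.card_pos]
  let ν : Measure (ι → E) := Measure.pi fun _ => μ
  let B := sampleForm ι L
  have h_error (ω : ι → E) :
      ‖S (∫ y, L y • y ∂μ) - S ((1 / n) • ∑ i, L (ω i) • ω i)‖ =
        1 / n * ‖S (∫ v, B v v ∂ν - B ω ω)‖ := by
    have h_scale : (∫ y, L y • y ∂μ) - (1 / n) • ∑ i, L (ω i) • ω i =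
        (1 / n) • (∫ v, B v v ∂ν - B ω ω) := by
      rw [integral_sampleForm_self, sampleForm_apply, smul_sub, smul_smul,
        one_div_mul_cancel hn.ne', one_smul]
    rw [← map_sub, h_scale, map_smul, norm_smul, Real.norm_of_nonneg (one_div_pos.2 hn).le]
  calc ∫ ω, ‖S (∫ y, L y • y ∂μ) - S ((1 / n) • ∑ i, L (ω i) • ω i)‖ ∂ν
      = 1 / n * ∫ ω, ‖S (∫ v, B v v ∂ν - B ω ω)‖ ∂ν := by
        simp_rw [h_error, integral_const_mul]
    _ ≤ 1 / n * (2 * ∫ p, ‖S (B p.1 p.2)‖ ∂ν.prod ν) := by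
        gcongr
        exact integral_norm_map_integral_bilin_self_sub_le (integral_pi_eq_zero fun _ => hμ) B S
    _ ≤ 1 / n * (2 * (√n * √Var[L; μ] * ∫ y, ‖S y‖ ∂μ)) := by
        gcongr
        exact integral_norm_map_sampleForm_le hμ S L
    _ = 2 / √n * √Var[L; μ] * ∫ y, ‖S y‖ ∂μ := by
        rw [div_eq_mul_inv 2, ← Real.sqrt_div_self]
        ring

end GaussianSums

section StandardGaussian

variable {κ : Type*} [Fintype κ]

/-- The functional `y ↦ ⟨x, y⟩` on `κ → ℝ`, whose sup norm provides no inner product. -/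
noncomputable def dotDual (x : κ → ℝ) : StrongDual ℝ (κ → ℝ) :=
  ∑ l, x l • .proj l

lemma dotDual_apply (x y : κ → ℝ) : dotDual x y = ∑ l, y l * x l := by
  simp [dotDual, mul_comm]

lemma integral_pi_gaussianReal :
    ∫ y, y ∂Measure.pi (fun _ : κ => gaussianReal 0 1) = 0 :=
  integral_pi_eq_zero fun _ => integral_id_gaussianReal

lemma integral_sq_gaussianReal (v : NNReal) : ∫ t, t ^ 2 ∂gaussianReal 0 v = v := by
  have h_mean : ∫ t, t ∂gaussianReal 0 v = 0 := integral_id_gaussianReal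
  rw [← variance_of_integral_eq_zero aemeasurable_id' h_mean, variance_fun_id_gaussianReal]

lemma integral_eval_mul_eval_pi_gaussianReal [DecidableEq κ] (l j : κ) :
    ∫ y, y l * y j ∂Measure.pi (fun _ : κ => gaussianReal 0 1) = if l = j then 1 else 0 := by
  let γ : κ → Measure ℝ := fun _ => gaussianReal 0 1
  split_ifs with h
  · subst h
    simp_rw [← sq]
    rw [integral_comp_eval (μ := γ) (f := fun t => t ^ 2) (by fun_prop), integral_sq_gaussianReal,
      NNReal.coe_one]
  · have h_indep : (fun y : κ → ℝ => y l) ⟂ᵢ[Measure.pi γ] fun y => y j :=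
      (iIndepFun_pi (X := fun _ => id) fun _ => aemeasurable_id).indepFun h
    have h_mean : ∫ y, y l ∂Measure.pi γ = 0 :=
      (integral_eval (μ := γ)).trans integral_id_gaussianReal
    rw [h_indep.integral_fun_mul_eq_mul_integral (measurable_pi_apply l).aestronglyMeasurable
      (measurable_pi_apply j).aestronglyMeasurable, h_mean, zero_mul]

lemma integral_dotDual_smul_self (x : κ → ℝ) :
    ∫ y, dotDual x y • y ∂Measure.pi (fun _ : κ => gaussianReal 0 1) = x := by
  classical
  let γ : Measure (κ → ℝ) := Measure.pi fun _ => gaussianReal 0 1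
  have h_int (L : StrongDual ℝ (κ → ℝ)) (j : κ) : Integrable (fun y => (L y • y) j) γ :=
    (integrable_dual_smul_self γ L).eval j
  have h_int_mul (l j : κ) : Integrable (fun y : κ → ℝ => y l * y j * x l) γ :=
    (h_int (.proj l) j).mul_const (x l)
  ext j
  calc (∫ y, dotDual x y • y ∂γ) j = ∫ y, ∑ l, y l * y j * x l ∂γ := by
        rw [eval_integral (h_int _)]
        simp only [Pi.smul_apply, smul_eq_mul, dotDual_apply, Finset.sum_mul, mul_right_comm]
    _ = ∑ l, (if l = j then 1 else 0) * x l := by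
        rw [integral_finsetSum _ fun l _ => h_int_mul l j]
        simp_rw [integral_mul_const, γ, integral_eval_mul_eval_pi_gaussianReal]
    _ = x j := by simp

lemma variance_dotDual (x : κ → ℝ) :
    Var[dotDual x; Measure.pi fun _ : κ => gaussianReal 0 1] = ∑ j, x j ^ 2 := by
  rw [← dual_integral_dual_smul_self integral_pi_gaussianReal, integral_dotDual_smul_self,
    dotDual_apply]
  simp only [sq]

lemma integral_norm_sub_monteCarlo_le {ι G : Type*} [Fintype ι] [Nonempty ι]
    [NormedAddCommGroup G] [NormedSpace ℝ G] (S : (κ → ℝ) →ₗ[ℝ] G) (x : κ → ℝ) :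
    ∫ ω, ‖S x - S (fun j => (1 / (Fintype.card ι : ℝ)) * ∑ i, ω i j * ∑ l, ω i l * x l)‖
        ∂(Measure.pi fun _ : ι => Measure.pi fun _ : κ => gaussianReal 0 1) ≤
      2 / √(Fintype.card ι) * √(∑ j, x j ^ 2) *
        ∫ y, ‖S y‖ ∂Measure.pi fun _ : κ => gaussianReal 0 1 := by
  have h_bound := stmt4_general (ι := ι) integral_pi_gaussianReal S.toContinuousLinearMap
    (dotDual x)
  have h_apply (ω : ι → κ → ℝ) :
      (1 / (Fintype.card ι : ℝ)) • ∑ i, dotDual x (ω i) • ω i =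
        fun j => (1 / (Fintype.card ι : ℝ)) * ∑ i, ω i j * ∑ l, ω i l * x l := by
    ext j
    simp [dotDual_apply, mul_comm]
  simpa only [integral_dotDual_smul_self, variance_dotDual, h_apply,
    LinearMap.coe_toContinuousLinearMap'] using h_bound

end StandardGaussian

theorem stmt4 {G : Type*} [NormedAddCommGroup G] [NormedSpace ℝ G]
    (n m : ℕ) (hn : 1 ≤ n) (hm : 1 ≤ m)
    (S : (Fin m → ℝ) →ₗ[ℝ] G) :
    (∀ x : Fin m → ℝ,
      (∫ ω : Fin n → Fin m → ℝ,
          ‖S x - S (fun j => (1 / (n : ℝ)) * ∑ i, ω i j * ∑ l, ω i l * x l)‖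
        ∂(Measure.pi fun _ => Measure.pi fun _ => gaussianReal 0 1))
      ≤ 2 / Real.sqrt n * Real.sqrt (∑ j, x j ^ 2) * ∫ y, ‖S y‖ ∂stdGaussian m) ∧
    (∀ x : Fin m → ℝ, Real.sqrt (∑ j, x j ^ 2) ≤ 1 →
      (∫ ω : Fin n → Fin m → ℝ,
          ‖S x - S (fun j => (1 / (n : ℝ)) * ∑ i, ω i j * ∑ l, ω i l * x l)‖
        ∂(Measure.pi fun _ => Measure.pi fun _ => gaussianReal 0 1))
      ≤ 2 / Real.sqrt n * ∫ y, ‖S y‖ ∂stdGaussian m) := by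
  have : Nonempty (Fin n) := ⟨⟨0, hn⟩⟩
  have bound (x : Fin m → ℝ) := integral_norm_sub_monteCarlo_le (ι := Fin n) S x
  rw [Fintype.card_fin] at bound
  exact ⟨bound, fun x hx => (bound x).trans <| mul_le_mul_of_nonneg_right
    (mul_le_of_le_one_right (by positivity) hx) (integral_nonneg fun _ => norm_nonneg _)⟩
end

section
/- Let d ≥ 100 be an integer and let n ∈ ℕ with n ≤ 108 · exp(√d − 10). Consider any randomized adaptive sampling algorithm of cardinality n for monotone Boolean functions: a probability space (Ω, Σ, ℙ) and, for each ω ∈ Ω, n sample points where the k-th point t_k^ω ∈ {0,1}^d is chosen measurably as a function of ω and of the previously observed values f(t₁^ω), …, f(t_{k−1}^ω), together with an output map that produces a Boolean function A^ω(f) : {0,1}^d → {0,1} depending on f only through the n observed values, measurably in ω. Then sup over monotone Boolean f : {0,1}^d → {0,1} of 𝔼_ω [ 2^{−d} · #{x ∈ {0,1}^d : f(x) ≠ (A^ω(f))(x)} ] > 1/30. More generally, for every 0 < ε ≤ 1/30 and every integer d ≥ 1/(9ε²), the same conclusion with lower bound > ε holds for every such algorithm with n ≤ 108 · exp(√d/(30ε)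 − 10). -/
open MeasureTheory

/-!
By Yao's principle it suffices to find a random monotone function on which every deterministic
algorithm is wrong often. Take the disjunction of a random set of terms, each a conjunction of `t`
variables, and let it accept everything above layer `b`. A point on a layer between `a` and `b`
satisfies between `a.choose t` and `b.choose t` of all the terms. Draw each term with probability
about `1 / b.choose t`, so that a point on layer `b` is rejected with probability `1 / e`.

A sample with answer `false` rules out at most `b.choose t` terms, and one with answer `true`
rules out none. All terms that are not ruled out may still be present: adding them to a function
consistent with the answers does not change the answers. Hence a point `x` whose terms are mostly
not ruled out remains undecided, with conditional probabilities of both values bounded away from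
zero, and any guess for the value at `x` errs with constant probability. By double counting, `n`
samples rule out on average at most a fraction `n * b.choose t / d.choose t` of the terms of a
point, up to a constant factor. With `t ≈ √d / (20 ε)` this fraction is negligible for
`n ≤ 108 * exp (√d / (30 ε) - 10)`, while the `≈ 6 ε √d` layers from the middle one upwards carry
enough points for the error to exceed `ε`.
-/

namespace MonotoneSampling

open Finset

section Bernoulli

variable {δ : Type*} {p : ℝ} {D E : Finset δ} {F G : Finset δ → ℝ}

/-- The expectation of `F W` for the random subset `W` of `D` that contains each element of `D`
independently with probability `p`, written as a finite sum over the subsets of `D`. -/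
noncomputable def bernoulliExp (p : ℝ) (D : Finset δ) (F : Finset δ → ℝ) : ℝ :=
  ∑ W ∈ D.powerset, p ^ #W * (1 - p) ^ (#D - #W) * F W

lemma bernoulliWeight_nonneg (hp : p ∈ Set.Icc (0 : ℝ) 1) (m k : ℕ) :
    0 ≤ p ^ m * (1 - p) ^ k :=
  mul_nonneg (pow_nonneg hp.1 m) (pow_nonneg (sub_nonneg.2 hp.2) k)

lemma bernoulliExp_const (p : ℝ) (D : Finset δ) (c : ℝ) : bernoulliExp p D (fun _ => c) = c := by
  rw [bernoulliExp, ← sum_mul, sum_pow_mul_eq_add_pow, add_sub_cancel, one_pow, one_mul]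

lemma bernoulliExp_sub (p : ℝ) (D : Finset δ) (F G : Finset δ → ℝ) :
    bernoulliExp p D (fun W => F W - G W) = bernoulliExp p D F - bernoulliExp p D G := by
  simp only [bernoulliExp, mul_sub, sum_sub_distrib]

lemma bernoulliExp_const_mul (p : ℝ) (D : Finset δ) (c : ℝ) (F : Finset δ → ℝ) :
    bernoulliExp p D (fun W => c * F W) = c * bernoulliExp p D F := by
  simp only [bernoulliExp, mul_left_comm _ c, mul_sum]

lemma bernoulliExp_sum {ι : Type*} (p : ℝ) (D : Finset δ) (s : Finset ι)
    (F : ι → Finset δ → ℝ) :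
    bernoulliExp p D (fun W => ∑ i ∈ s, F i W) = ∑ i ∈ s, bernoulliExp p D (F i) := by
  simp only [bernoulliExp, mul_sum]
  exact sum_comm

lemma bernoulliExp_mono (hp : p ∈ Set.Icc (0 : ℝ) 1) (h : ∀ W ⊆ D, F W ≤ G W) :
    bernoulliExp p D F ≤ bernoulliExp p D G :=
  sum_le_sum fun W hW =>
    mul_le_mul_of_nonneg_left (h W (mem_powerset.1 hW)) (bernoulliWeight_nonneg hp _ _)

lemma pow_mul_le_bernoulliExp (hp : p ∈ Set.Icc (0 : ℝ) 1) (hF : ∀ W ⊆ D, 0 ≤ F W) :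
    (1 - p) ^ #D * F ∅ ≤ bernoulliExp p D F := by
  have h := single_le_sum (f := fun W => p ^ #W * (1 - p) ^ (#D - #W) * F W)
    (fun W hW => mul_nonneg (bernoulliWeight_nonneg hp _ _) (hF W (mem_powerset.1 hW)))
    (empty_mem_powerset D)
  simpa only [bernoulliExp, card_empty, pow_zero, one_mul, Nat.sub_zero] using h

variable [DecidableEq δ]

lemma bernoulliExp_insert {a : δ} (ha : a ∉ D) (p : ℝ) (F : Finset δ → ℝ) :
    bernoulliExp p (insert a D) F =
      p * bernoulliExp p D (fun W => F (insert a W)) + (1 - p) * bernoulliExp p D F := by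
  simp only [bernoulliExp]
  rw [sum_powerset_insert ha, add_comm, mul_sum, mul_sum]
  congr 1 <;> refine sum_congr rfl fun W hW => ?_
  · rw [card_insert_of_notMem ha, card_insert_of_notMem (notMem_mono (mem_powerset.1 hW) ha),
      Nat.add_sub_add_right]
    ring
  · rw [card_insert_of_notMem ha, Nat.sub_add_comm (card_le_card (mem_powerset.1 hW)), pow_succ]
    ring

lemma bernoulliExp_union (h : Disjoint D E) (p : ℝ) (F : Finset δ → ℝ) :
    bernoulliExp p (D ∪ E) F =
      bernoulliExp p D fun U => bernoulliExp p E fun V => F (U ∪ V) := by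
  induction D using Finset.induction_on generalizing F with
  | empty => simp [bernoulliExp]
  | insert a D ha ih =>
    obtain ⟨haE, hDE⟩ := disjoint_insert_left.1 h
    rw [insert_union, bernoulliExp_insert (by simp [ha, haE]), bernoulliExp_insert ha,
      ih hDE, ih hDE]
    simp only [insert_union]

lemma bernoulliExp_eq_sdiff (h : E ⊆ D) (p : ℝ) (F : Finset δ → ℝ) :
    bernoulliExp p D F =
      bernoulliExp p (D \ E) fun U => bernoulliExp p E fun V => F (U ∪ V) := by
  rw [← bernoulliExp_union sdiff_disjoint, sdiff_union_of_subset h]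

lemma pow_mul_bernoulliExp_sdiff_le (hp : p ∈ Set.Icc (0 : ℝ) 1) (h : E ⊆ D)
    (hF : ∀ W, 0 ≤ F W) :
    (1 - p) ^ #E * bernoulliExp p (D \ E) F ≤ bernoulliExp p D F := by
  rw [bernoulliExp_eq_sdiff h, ← bernoulliExp_const_mul]
  refine bernoulliExp_mono hp fun U _ => ?_
  simpa only [union_empty] using
    pow_mul_le_bernoulliExp (F := fun V => F (U ∪ V)) hp fun V _ => hF _

lemma bernoulliExp_disjoint (p : ℝ) (D S : Finset δ) :
    bernoulliExp p D (fun W => if Disjoint W S then 1 else 0) = (1 - p) ^ #(D ∩ S) := by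
  induction D using Finset.induction_on with
  | empty => simp [bernoulliExp]
  | insert a D ha ih =>
    rw [bernoulliExp_insert ha, ih]
    by_cases haS : a ∈ S
    · simp only [disjoint_insert_left, haS, not_true, false_and, if_false, bernoulliExp_const,
        insert_inter_of_mem, card_insert_of_notMem (notMem_mono inter_subset_left ha)]
      ring
    · simp only [disjoint_insert_left, haS, not_false_eq_true, true_and, ih,
        insert_inter_of_notMem]
      ring

end Bernoulli

section TruncatedDNF

variable {X δ : Type*} [DecidableEq δ]

/-- The truncated monotone DNF with set of terms `W`, where `sat x` is the set of all terms
satisfied by `x`: it accepts `x` if `x` satisfies a term in `W` or lies in `top`. For a random `W`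
these are the functions that are hard to learn from few samples. -/
def dnf (sat : X → Finset δ) (top : X → Prop) [DecidablePred top] (W : Finset δ) (x : X) : Bool :=
  decide (top x ∨ ¬ Disjoint W (sat x))

/-- The terms that the values of `f` on `Q` rule out: those satisfied by a point of `Q` that `f`
rejects. -/
def refuted (sat : X → Finset δ) (f : X → Bool) (Q : Finset X) : Finset δ :=
  {x ∈ Q | f x = false}.biUnion sat

/-- The deterministic sampling algorithm `out`, which queries its input `f` at the points `Q f`,
depends on `f` only through the answers. -/
def IsDeterminedBy {Y : Type*} (out : (X → Bool) → Y) (Q : (X → Bool) → Finset X) : Prop :=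
  ∀ f g, Set.EqOn f g (Q f) → out f = out g

variable {sat : X → Finset δ} {top : X → Prop} [DecidablePred top]

lemma dnf_eq_false_iff {W : Finset δ} {x : X} :
    dnf sat top W x = false ↔ ¬ top x ∧ Disjoint W (sat x) := by
  simp only [dnf, decide_eq_false_iff_not, not_or, not_not]

lemma dnf_eqOn_union {U V : Finset δ} {Q : Finset X}
    (hV : Disjoint V (refuted sat (dnf sat top U) Q)) :
    Set.EqOn (dnf sat top U) (dnf sat top (U ∪ V)) Q := by
  intro x hx
  rw [Bool.eq_iff_iff, ← not_iff_not, Bool.not_eq_true, Bool.not_eq_true]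
  refine ⟨fun h => ?_, fun h => ?_⟩
  · have hVx : Disjoint V (sat x) := disjoint_of_subset_right
      (subset_biUnion_of_mem sat (mem_filter.2 ⟨hx, h⟩)) hV
    rw [dnf_eq_false_iff] at h ⊢
    exact ⟨h.1, disjoint_union_left.2 ⟨h.2, hVx⟩⟩
  · rw [dnf_eq_false_iff] at h ⊢
    exact ⟨h.1, (disjoint_union_left.1 h.2).1⟩

lemma card_refuted_le {n B : ℕ} {W : Finset δ} {Q : Finset X} (hQ : #Q ≤ n)
    (hB : ∀ x, ¬ top x → #(sat x) ≤ B) : #(refuted sat (dnf sat top W) Q) ≤ n * B :=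
  (card_biUnion_le_card_mul _ _ B fun x hx =>
    hB x (dnf_eq_false_iff.1 (mem_filter.1 hx).2).1).trans
    (Nat.mul_le_mul_right B ((card_filter_le _ _).trans hQ))

lemma sum_card_inter_le_card_mul {M : ℕ} {R : Finset δ} {S : Finset X}
    (hM : ∀ w ∈ R, #{x ∈ S | w ∈ sat x} ≤ M) : ∑ x ∈ S, #(R ∩ sat x) ≤ #R * M := by
  simp_rw [← filter_mem_eq_inter]
  rw [← smul_eq_mul]
  exact (sum_card_bipartiteAbove_eq_sum_card_bipartiteBelow fun x w => w ∈ sat x).trans_le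
    (sum_le_card_nsmul _ _ _ hM)

/-- The indicator of the event that the algorithm `out`, run on the truncated DNF with terms `W`,
errs at `x`. -/
noncomputable def dnfError (sat : X → Finset δ) (top : X → Prop) [DecidablePred top]
    (out : (X → Bool) → X → Bool) (x : X) (W : Finset δ) : ℝ :=
  if dnf sat top W x ≠ out (dnf sat top W) x then 1 else 0

/-- The number of terms satisfied by `x` that the algorithm with queries `Q` sees refuted when run
on the truncated DNF with terms `W`. -/
def numRefuted (sat : X → Finset δ) (top : X → Prop) [DecidablePred top]
    (Q : (X → Bool) → Finset X) (x : X) (W : Finset δ) : ℕ :=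
  #(refuted sat (dnf sat top W) (Q (dnf sat top W)) ∩ sat x)

variable {out : (X → Bool) → X → Bool} {Q : (X → Bool) → Finset X} {p : ℝ} {x : X}

lemma dnfError_nonneg (W : Finset δ) : 0 ≤ dnfError sat top out x W := by
  unfold dnfError
  split_ifs <;> norm_num

-- Adding terms that are not refuted does not change the answers, hence not the output either.
lemma dnfError_union_eq_one (hout : IsDeterminedBy out Q) {U V : Finset δ}
    (hU : out (dnf sat top U) x = false)
    (hV : Disjoint V (refuted sat (dnf sat top U) (Q (dnf sat top U))))
    (hVx : ¬ Disjoint V (sat x)) : dnfError sat top out x (U ∪ V) = 1 := by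
  have htrue : dnf sat top (U ∪ V) x = true := by
    rw [← Bool.not_eq_false, dnf_eq_false_iff]
    exact fun h => hVx (disjoint_union_left.1 h.2).2
  rw [dnfError, ← hout _ _ (dnf_eqOn_union hV), hU, htrue, if_pos (by decide)]

lemma min_sub_le_bernoulliExp_dnfError_union (hp : p ∈ Set.Icc (0 : ℝ) 1)
    (hout : IsDeterminedBy out Q) (hx : ¬ top x) {U : Finset δ} (hU : Disjoint U (sat x)) :
    min ((1 - p) ^ #(sat x)) (1 - (1 - p) ^ #(sat x)) - p * numRefuted sat top Q x U ≤
      bernoulliExp p (sat x) fun V => dnfError sat top out x (U ∪ V) := by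
  have hloss : 0 ≤ p * numRefuted sat top Q x U := mul_nonneg hp.1 (Nat.cast_nonneg _)
  cases hUx : out (dnf sat top U) x with
  | true =>
    have herr : dnfError sat top out x (U ∪ ∅) = 1 := by
      rw [union_empty, dnfError, hUx, dnf_eq_false_iff.2 ⟨hx, hU⟩, if_pos (by decide)]
    have h := pow_mul_le_bernoulliExp (D := sat x) hp
      fun V _ => dnfError_nonneg (sat := sat) (top := top) (out := out) (x := x) (U ∪ V)
    rw [herr, mul_one] at h
    linarith [min_le_left ((1 - p) ^ #(sat x)) (1 - (1 - p) ^ #(sat x))]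
  | false =>
    set R := refuted sat (dnf sat top U) (Q (dnf sat top U)) with hR
    have hbern : 1 - p * numRefuted sat top Q x U ≤ (1 - p) ^ #(sat x ∩ R) := by
      rw [numRefuted, ← hR, inter_comm R]
      linarith [one_add_mul_sub_le_pow (a := 1 - p) (by linarith [hp.2]) #(sat x ∩ R)]
    have hexp : (1 - p) ^ #(sat x ∩ R) - (1 - p) ^ #(sat x) ≤
        bernoulliExp p (sat x) fun V => dnfError sat top out x (U ∪ V) := by
      nth_rw 2 [← inter_self (sat x)]
      rw [← bernoulliExp_disjoint, ← bernoulliExp_disjoint, ← bernoulliExp_sub]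
      refine bernoulliExp_mono hp fun V _ => ?_
      have h0 := dnfError_nonneg (sat := sat) (top := top) (out := out) (x := x) (U ∪ V)
      by_cases hVx : Disjoint V (sat x)
      · rw [if_pos hVx]
        split_ifs <;> linarith
      · by_cases hV : Disjoint V R
        · simp [hV, hVx, dnfError_union_eq_one hout hUx hV hVx]
        · simp [hV, hVx, h0]
    linarith [min_le_right ((1 - p) ^ #(sat x)) (1 - (1 - p) ^ #(sat x))]

lemma min_sub_le_bernoulliExp_dnfError (hp : p ∈ Set.Icc (0 : ℝ) 1) (hout : IsDeterminedBy out Q)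
    (hx : ¬ top x) {D : Finset δ} (hD : sat x ⊆ D) {c : ℝ} (hc : 1 ≤ c * (1 - p) ^ #(sat x)) :
    min ((1 - p) ^ #(sat x)) (1 - (1 - p) ^ #(sat x)) -
        p * c * bernoulliExp p D (fun W => numRefuted sat top Q x W) ≤
      bernoulliExp p D (dnfError sat top out x) := by
  set q := (1 - p) ^ #(sat x)
  set r : Finset δ → ℝ := fun W => numRefuted sat top Q x W
  have hr : ∀ W, 0 ≤ r W := fun W => Nat.cast_nonneg _
  have hq : 0 ≤ q := pow_nonneg (sub_nonneg.2 hp.2) _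
  have hc0 : 0 ≤ c := (pos_of_mul_pos_left (one_pos.trans_le hc) hq).le
  have hr' : bernoulliExp p (D \ sat x) r ≤ c * bernoulliExp p D r :=
    calc bernoulliExp p (D \ sat x) r
        ≤ c * q * bernoulliExp p (D \ sat x) r := le_mul_of_one_le_left
          (sum_nonneg fun W _ => mul_nonneg (bernoulliWeight_nonneg hp _ _) (hr W)) hc
      _ = c * (q * bernoulliExp p (D \ sat x) r) := mul_assoc _ _ _
      _ ≤ c * bernoulliExp p D r :=
          mul_le_mul_of_nonneg_left (pow_mul_bernoulliExp_sdiff_le hp hD hr) hc0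
  calc min q (1 - q) - p * c * bernoulliExp p D r
      ≤ min q (1 - q) - p * bernoulliExp p (D \ sat x) r := by
        rw [mul_assoc]
        exact sub_le_sub_left (mul_le_mul_of_nonneg_left hr' hp.1) _
    _ = bernoulliExp p (D \ sat x) fun U => min q (1 - q) - p * r U := by
        rw [bernoulliExp_sub, bernoulliExp_const, bernoulliExp_const_mul]
    _ ≤ bernoulliExp p D (dnfError sat top out x) := by
        rw [bernoulliExp_eq_sdiff hD]
        exact bernoulliExp_mono hp fun U hU => min_sub_le_bernoulliExp_dnfError_union hp hout hx
          (disjoint_of_subset_left hU sdiff_disjoint)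

lemma sum_bernoulliExp_numRefuted_le (hp : p ∈ Set.Icc (0 : ℝ) 1) {D : Finset δ}
    (hD : ∀ x, sat x ⊆ D) {S : Finset X} {n B M : ℕ} (hQ : ∀ f, #(Q f) ≤ n)
    (hB : ∀ x, ¬ top x → #(sat x) ≤ B) (hM : ∀ w ∈ D, #{x ∈ S | w ∈ sat x} ≤ M) :
    ∑ x ∈ S, bernoulliExp p D (fun W => numRefuted sat top Q x W) ≤ n * B * M := by
  rw [← bernoulliExp_sum, ← bernoulliExp_const p D (n * B * M : ℝ)]
  refine bernoulliExp_mono hp fun W _ => ?_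
  have hsub : refuted sat (dnf sat top W) (Q (dnf sat top W)) ⊆ D :=
    biUnion_subset.2 fun x _ => hD x
  exact_mod_cast (sum_card_inter_le_card_mul fun w hw => hM w (hsub hw)).trans
    (Nat.mul_le_mul_right M (card_refuted_le (hQ _) hB))

/-- The probability with which a term is drawn, chosen so that a point satisfying `N` terms
satisfies none of the drawn ones with probability `exp (-N / B)`. -/
noncomputable def termProb (B : ℕ) : ℝ :=
  1 - Real.exp (-1 / B)

lemma termProb_mem_Icc (B : ℕ) : termProb B ∈ Set.Icc (0 : ℝ) 1 :=
  ⟨sub_nonneg.2 (Real.exp_le_one_iff.2 (by rw [neg_div]; simp)),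
    sub_le_self _ (Real.exp_pos _).le⟩

lemma termProb_mul_le_one (B : ℕ) : termProb B * B ≤ 1 := by
  rcases B.eq_zero_or_pos with rfl | hB
  · simp
  · rw [← le_div_iff₀ (by exact_mod_cast hB), termProb]
    linarith [Real.add_one_le_exp (-1 / B : ℝ), neg_div (B : ℝ) 1]

lemma one_sub_termProb_pow (B N : ℕ) : (1 - termProb B) ^ N = Real.exp (-(N / B)) := by
  rw [termProb, sub_sub_cancel, ← Real.exp_nat_mul]
  congr 1
  ring

lemma min_exp_sub_le_bernoulliExp_dnfError (hout : IsDeterminedBy out Q) (hx : ¬ top x)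
    {D : Finset δ} (hD : sat x ⊆ D) {A B : ℕ} (hA : A ≤ #(sat x)) (hB : #(sat x) ≤ B) :
    min (Real.exp (-1)) (1 - Real.exp (-(A / B))) -
        termProb B * Real.exp 1 *
          bernoulliExp (termProb B) D (fun W => numRefuted sat top Q x W) ≤
      bernoulliExp (termProb B) D (dnfError sat top out x) := by
  have hqA : (1 - termProb B) ^ #(sat x) ≤ Real.exp (-(A / B)) := by
    rw [one_sub_termProb_pow]
    gcongr
  have hqB : Real.exp (-1) ≤ (1 - termProb B) ^ #(sat x) := by
    rw [one_sub_termProb_pow]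
    gcongr
    exact div_le_one_of_le₀ (mod_cast hB) (Nat.cast_nonneg B)
  have hc : 1 ≤ Real.exp 1 * (1 - termProb B) ^ #(sat x) := by
    rwa [← div_le_iff₀' (Real.exp_pos 1), one_div, ← Real.exp_neg]
  exact (sub_le_sub_right (min_le_min hqB (sub_le_sub_left hqA 1)) _).trans
    (min_sub_le_bernoulliExp_dnfError (termProb_mem_Icc B) hout hx hD hc)

lemma le_bernoulliExp_sum_dnfError (hout : IsDeterminedBy out Q) {D : Finset δ}
    (hD : ∀ x, sat x ⊆ D) {S : Finset X} (hS : ∀ x ∈ S, ¬ top x) {n A B M : ℕ}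
    (hQ : ∀ f, #(Q f) ≤ n) (hA : ∀ x ∈ S, A ≤ #(sat x)) (hB : ∀ x, ¬ top x → #(sat x) ≤ B)
    (hM : ∀ w ∈ D, #{x ∈ S | w ∈ sat x} ≤ M) :
    min (Real.exp (-1)) (1 - Real.exp (-(A / B))) * #S - Real.exp 1 * n * M ≤
      bernoulliExp (termProb B) D fun W => ∑ x ∈ S, dnfError sat top out x W := by
  set p := termProb B
  set α := min (Real.exp (-1)) (1 - Real.exp (-(A / B : ℝ)))
  have hp : p ∈ Set.Icc (0 : ℝ) 1 := termProb_mem_Icc B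
  have hloss : p * Real.exp 1 * (n * B * M) ≤ Real.exp 1 * n * M :=
    calc p * Real.exp 1 * (n * B * M) = p * B * (Real.exp 1 * n * M) := by ring
      _ ≤ Real.exp 1 * n * M := mul_le_of_le_one_left (by positivity) (termProb_mul_le_one B)
  calc α * #S - Real.exp 1 * n * M
      ≤ α * #S - p * Real.exp 1 *
          ∑ x ∈ S, bernoulliExp p D (fun W => numRefuted sat top Q x W) :=
        sub_le_sub_left ((mul_le_mul_of_nonneg_left (sum_bernoulliExp_numRefuted_le hp hD hQ hB hM)
          (mul_nonneg hp.1 (Real.exp_pos 1).le)).trans hloss) _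
    _ = ∑ x ∈ S, (α - p * Real.exp 1 *
          bernoulliExp p D (fun W => numRefuted sat top Q x W)) := by
        rw [sum_sub_distrib, sum_const, nsmul_eq_mul, mul_sum, mul_comm]
    _ ≤ bernoulliExp p D fun W => ∑ x ∈ S, dnfError sat top out x W :=
        (sum_le_sum fun x hx => min_exp_sub_le_bernoulliExp_dnfError hout (hS x hx) (hD x) (hA x hx)
          (hB x (hS x hx))).trans_eq (bernoulliExp_sum _ _ _ _).symm

end TruncatedDNF

section BooleanCube

variable {ι : Type*} [Fintype ι] {t a b n : ℕ}

/-- The support of a point of the Boolean cube. -/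
def supp (x : ι → Bool) : Finset ι :=
  {i | x i = true}

lemma supp_bijective : Function.Bijective (supp : (ι → Bool) → Finset ι) := by
  refine ⟨fun x y h => funext fun i => ?_, fun s => ?_⟩
  · rw [Bool.eq_iff_iff]
    simpa only [supp, mem_filter_univ] using Finset.ext_iff.1 h i
  · classical exact ⟨fun i => decide (i ∈ s), by simp [supp]⟩

lemma supp_mono : Monotone (supp : (ι → Bool) → Finset ι) := fun _ _ h =>
  monotone_filter_right univ fun i _ => h i

variable [DecidableEq ι]

/-- The union of the layers `a, …, b` of the Boolean cube, that is, the set of all points with at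
least `a` and at most `b` ones. -/
def layers (ι : Type*) [Fintype ι] [DecidableEq ι] (a b : ℕ) : Finset (ι → Bool) :=
  {x | #(supp x) ∈ Icc a b}

lemma mem_layers {x : ι → Bool} : x ∈ layers ι a b ↔ #(supp x) ∈ Icc a b :=
  mem_filter_univ x

lemma card_layer_filter_subset_supp {w : Finset ι} {j : ℕ} (hw : #w ≤ j) :
    #{x : ι → Bool | #(supp x) = j ∧ w ⊆ supp x} =
      (Fintype.card ι - #w).choose (j - #w) := by
  rw [← card_univ, ← card_filter_powersetCard_subset w univ j (subset_univ w) hw]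
  exact card_bijective supp supp_bijective fun x => by simp

lemma card_layers_filter_subset_supp {w : Finset ι} (hw : #w ≤ a) (b : ℕ) :
    #{x ∈ layers ι a b | w ⊆ supp x} =
      ∑ j ∈ Icc a b, (Fintype.card ι - #w).choose (j - #w) := by
  have hmem : ∀ x ∈ ({x ∈ layers ι a b | w ⊆ supp x} : Finset _), #(supp x) ∈ Icc a b :=
    fun x hx => mem_layers.1 (mem_filter.1 hx).1
  rw [card_eq_sum_card_fiberwise hmem]
  refine sum_congr rfl fun j hj => ?_
  rw [← card_layer_filter_subset_supp (hw.trans (mem_Icc.1 hj).1)]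
  congr 1
  ext x
  simp only [mem_filter, mem_layers, mem_univ, true_and]
  exact ⟨fun h => ⟨h.2, h.1.2⟩, fun h => ⟨⟨h.1 ▸ hj, h.2⟩, h.1⟩⟩

lemma card_layers (ι : Type*) [Fintype ι] [DecidableEq ι] (a b : ℕ) :
    #(layers ι a b) = ∑ j ∈ Icc a b, (Fintype.card ι).choose j := by
  simpa using card_layers_filter_subset_supp (ι := ι) (w := ∅) (Nat.zero_le a) b

lemma card_layers_filter_subset_supp_mul_choose_le {w : Finset ι} (hw : #w ≤ a) :
    #{x ∈ layers ι a b | w ⊆ supp x} * (Fintype.card ι).choose #w ≤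
      b.choose #w * #(layers ι a b) := by
  rw [card_layers_filter_subset_supp hw, card_layers, sum_mul, mul_sum]
  refine sum_le_sum fun j hj => ?_
  have hj' := mem_Icc.1 hj
  rw [mul_comm, ← Nat.choose_mul (hw.trans hj'.1), mul_comm]
  exact Nat.mul_le_mul_right _ (Nat.choose_le_choose _ hj'.2)

/-- The truncated DNF on the Boolean cube whose terms are conjunctions of `t` variables and which
accepts all points with more than `b` ones. -/
def cubeDNF (t b : ℕ) (W : Finset (Finset ι)) : (ι → Bool) → Bool :=
  dnf (fun x => powersetCard t (supp x)) (fun x => b < #(supp x)) W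

lemma cubeDNF_monotone (t b : ℕ) (W : Finset (Finset ι)) : Monotone (cubeDNF t b W) := by
  intro x y hxy
  have hsupp := supp_mono hxy
  rw [Bool.le_iff_imp, ← not_imp_not, Bool.not_eq_true, Bool.not_eq_true]
  simp only [cubeDNF, dnf_eq_false_iff, not_lt]
  exact fun h => ⟨(card_le_card hsupp).trans h.1, disjoint_of_subset_right
    (powersetCard_mono hsupp) h.2⟩

/-- A lower bound for the average number of errors that an algorithm with `n` samples makes on the
layers `a, …, b` of the cube of dimension `d`, when it is run on a random `cubeDNF` with terms of
size `t`. -/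
noncomputable def errorBound (d n t a b : ℕ) : ℝ :=
  (min (Real.exp (-1)) (1 - Real.exp (-(a.choose t / b.choose t))) -
    Real.exp 1 * n * b.choose t / d.choose t) * ∑ j ∈ Icc a b, d.choose j

lemma sum_dnfError_le_hammingDist {X δ : Type*} [Fintype X] [DecidableEq δ]
    (sat : X → Finset δ) (top : X → Prop) [DecidablePred top] (out : (X → Bool) → X → Bool)
    (S : Finset X) (W : Finset δ) :
    ∑ x ∈ S, dnfError sat top out x W ≤ hammingDist (dnf sat top W) (out (dnf sat top W)) := by
  simp only [dnfError, sum_boole, hammingDist]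
  exact_mod_cast card_le_card (filter_subset_filter _ (subset_univ S))

lemma errorBound_le_bernoulliExp_hammingDist {out : ((ι → Bool) → Bool) → (ι → Bool) → Bool}
    {Q : ((ι → Bool) → Bool) → Finset (ι → Bool)} (hout : IsDeterminedBy out Q)
    (hQ : ∀ f, #(Q f) ≤ n) (hta : t ≤ a) (hab : a ≤ b) (hb : b ≤ Fintype.card ι) :
    errorBound (Fintype.card ι) n t a b ≤
      bernoulliExp (termProb (b.choose t)) (powersetCard t univ) fun W =>
        hammingDist (cubeDNF t b W) (out (cubeDNF t b W)) := by
  set d := Fintype.card ι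
  have hS : ∀ x ∈ layers ι a b, a ≤ #(supp x) ∧ #(supp x) ≤ b := fun x hx =>
    mem_Icc.1 (mem_layers.1 hx)
  set M := (b.choose t * #(layers ι a b)) / d.choose t
  have hchoose : 0 < d.choose t := Nat.choose_pos (hta.trans (hab.trans hb))
  have hM : ∀ w ∈ powersetCard t univ,
      #{x ∈ layers ι a b | w ∈ powersetCard t (supp x)} ≤ M := by
    intro w hw
    obtain rfl := (mem_powersetCard_univ.1 hw)
    simp only [mem_powersetCard, and_true]
    exact (Nat.le_div_iff_mul_le hchoose).2
      (card_layers_filter_subset_supp_mul_choose_le hta)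
  have h := le_bernoulliExp_sum_dnfError (sat := fun x => powersetCard t (supp x))
    (top := fun x => b < #(supp x)) (S := layers ι a b) (A := a.choose t) hout
    (fun x => powersetCard_mono (subset_univ _)) (fun x hx => not_lt.2 (hS x hx).2)
    hQ (fun x hx => (Nat.choose_le_choose t (hS x hx).1).trans
      (card_powersetCard _ _).ge)
    (fun x hx => (card_powersetCard _ _).trans_le (Nat.choose_le_choose t (not_lt.1 hx))) hM
  have hMle : (M : ℝ) ≤ b.choose t * #(layers ι a b) / d.choose t :=
    mod_cast Nat.cast_div_le (α := ℝ)
  refine le_trans ?_ (h.trans (bernoulliExp_mono (termProb_mem_Icc _) fun W _ =>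
    sum_dnfError_le_hammingDist _ _ out _ W))
  calc errorBound d n t a b
      = min (Real.exp (-1)) (1 - Real.exp (-(a.choose t / b.choose t))) * #(layers ι a b) -
          Real.exp 1 * n * (b.choose t * #(layers ι a b) / d.choose t) := by
        rw [errorBound, card_layers]
        push_cast
        ring
    _ ≤ _ := by gcongr

end BooleanCube

section Averaging

variable {δ Ω : Type*} [MeasurableSpace Ω] {P : Measure Ω} [IsProbabilityMeasure P]

-- The easy half of Yao's minimax principle.
lemma ofReal_le_iSup_lintegral_of_le_bernoulliExp {p c : ℝ} (hp : p ∈ Set.Icc (0 : ℝ) 1)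
    {D : Finset δ} {F : Finset δ → Ω → ℝ} (hF0 : ∀ W ω, 0 ≤ F W ω) (hF : ∀ W, Measurable (F W))
    (hc : ∀ ω, c ≤ bernoulliExp p D fun W => F W ω) :
    ENNReal.ofReal c ≤ ⨆ W, ∫⁻ ω, ENNReal.ofReal (F W ω) ∂P := by
  set wt : Finset δ → ℝ := fun W => p ^ #W * (1 - p) ^ (#D - #W)
  set S := ⨆ W, ∫⁻ ω, ENNReal.ofReal (F W ω) ∂P
  have hwt : ∀ W, 0 ≤ wt W := fun W => bernoulliWeight_nonneg hp _ _
  have hwt_sum : ∑ W ∈ D.powerset, wt W = 1 := by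
    simpa only [bernoulliExp, mul_one] using bernoulliExp_const p D 1
  have hmeas : ∀ W, Measurable fun ω => ENNReal.ofReal (F W ω) := fun W => (hF W).ennreal_ofReal
  calc ENNReal.ofReal c
      = ∫⁻ _, ENNReal.ofReal c ∂P := by rw [lintegral_const, measure_univ, mul_one]
    _ ≤ ∫⁻ ω, ∑ W ∈ D.powerset, ENNReal.ofReal (wt W) * ENNReal.ofReal (F W ω) ∂P := by
        refine lintegral_mono fun ω => (ENNReal.ofReal_le_ofReal (hc ω)).trans_eq ?_
        simp_rw [← ENNReal.ofReal_mul (hwt _)]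
        exact ENNReal.ofReal_sum_of_nonneg fun W _ => mul_nonneg (hwt W) (hF0 W ω)
    _ = ∑ W ∈ D.powerset, ENNReal.ofReal (wt W) * ∫⁻ ω, ENNReal.ofReal (F W ω) ∂P := by
        rw [lintegral_finsetSum _ fun W _ => (hmeas W).const_mul _]
        simp_rw [lintegral_const_mul _ (hmeas _)]
    _ ≤ ∑ W ∈ D.powerset, ENNReal.ofReal (wt W) * S :=
        sum_le_sum fun W _ => mul_le_mul_right (le_iSup (fun W => ∫⁻ ω, _ ∂P) W) _
    _ = S := by
        rw [← sum_mul, ← ENNReal.ofReal_sum_of_nonneg fun W _ => hwt W, hwt_sum,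
          ENNReal.ofReal_one, one_mul]

lemma ofReal_errorBound_div_le_iSup_lintegral {ι : Type*} [Fintype ι] [DecidableEq ι]
    {out : Ω → ((ι → Bool) → Bool) → (ι → Bool) → Bool}
    {Q : Ω → ((ι → Bool) → Bool) → Finset (ι → Bool)} {n t a b : ℕ}
    (hout : ∀ ω, IsDeterminedBy (out ω) (Q ω)) (hQ : ∀ ω f, #(Q ω f) ≤ n)
    (hmeas : ∀ f, Measurable fun ω => (hammingDist f (out ω f) : ℝ))
    (hta : t ≤ a) (hab : a ≤ b) (hb : b ≤ Fintype.card ι) :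
    ENNReal.ofReal (errorBound (Fintype.card ι) n t a b / 2 ^ Fintype.card ι) ≤
      ⨆ f : {f : (ι → Bool) → Bool // Monotone f},
        ∫⁻ ω, ENNReal.ofReal (hammingDist f.1 (out ω f.1) / 2 ^ Fintype.card ι) ∂P := by
  refine (ofReal_le_iSup_lintegral_of_le_bernoulliExp (termProb_mem_Icc (b.choose t))
    (D := powersetCard t univ)
    (F := fun W ω => hammingDist (cubeDNF t b W) (out ω (cubeDNF t b W)) / 2 ^ Fintype.card ι)
    (fun W ω => by positivity) (fun W => (hmeas _).div_const _) fun ω => ?_).trans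
    (iSup_le fun W => le_iSup_of_le ⟨cubeDNF t b W, cubeDNF_monotone t b W⟩ le_rfl)
  simp_rw [div_eq_inv_mul _ (2 ^ Fintype.card ι : ℝ), bernoulliExp_const_mul]
  exact mul_le_mul_of_nonneg_left
    (errorBound_le_bernoulliExp_hammingDist (hout ω) (hQ ω) hta hab hb) (by positivity)

end Averaging

section Adaptive

variable {X Y : Type*} {n : ℕ} {L : (k : Fin n) → (Fin k → Bool) → X}
  {pts : (X → Bool) → Fin n → X}

lemma adaptive_pts_congr (hpts : ∀ f k, pts f k = L k fun j => f (pts f (j.castLE k.isLt.le)))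
    {f g : X → Bool} (h : ∀ k, f (pts f k) = g (pts f k)) : pts f = pts g := by
  funext k
  induction k using WellFoundedLT.induction with
  | ind k ih =>
    rw [hpts f, hpts g]
    congr 1
    funext j
    rw [h, ih (j.castLE k.isLt.le) j.isLt]

lemma isDeterminedBy_of_adaptive [DecidableEq X]
    (hpts : ∀ f k, pts f k = L k fun j => f (pts f (j.castLE k.isLt.le)))
    (A : (Fin n → Bool) → Y) :
    IsDeterminedBy (fun f => A fun k => f (pts f k)) fun f => univ.image (pts f) := by
  intro f g h
  have hanswers : ∀ k, f (pts f k) = g (pts f k) := fun k =>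
    h (mem_coe.2 (mem_image_of_mem _ (mem_univ k)))
  dsimp only
  rw [← adaptive_pts_congr hpts hanswers]
  simp_rw [hanswers]

end Adaptive

section Binomials

variable {a b d t i : ℕ}

lemma choose_mul_pow_le (hbd : b ≤ d) (t : ℕ) : b.choose t * d ^ t ≤ d.choose t * b ^ t := by
  induction t with
  | zero => simp
  | succ t ih =>
    have hstep : (b - t) * d ≤ (d - t) * b := by
      rw [Nat.sub_mul, Nat.sub_mul, mul_comm d b]
      exact Nat.sub_le_sub_left (Nat.mul_le_mul_left t hbd) _
    refine Nat.le_of_mul_le_mul_right ?_ t.succ_pos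
    calc b.choose (t + 1) * d ^ (t + 1) * (t + 1)
        = b.choose (t + 1) * (t + 1) * d ^ t * d := by ring
      _ = b.choose t * d ^ t * ((b - t) * d) := by rw [Nat.choose_succ_right_eq]; ring
      _ ≤ d.choose t * b ^ t * ((d - t) * b) := Nat.mul_le_mul ih hstep
      _ = d.choose (t + 1) * (t + 1) * b ^ t * b := by rw [Nat.choose_succ_right_eq]; ring
      _ = d.choose (t + 1) * b ^ (t + 1) * (t + 1) := by ring

lemma choose_add_le_choose_mul_exp (hta : t ≤ a) (i : ℕ) :
    ((a + i).choose t : ℝ) ≤ a.choose t * Real.exp (i * (t / (a - t + 1))) := by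
  induction i with
  | zero => simp
  | succ i ih =>
    have hta' : (t : ℝ) ≤ a := mod_cast hta
    have hrec : ((a + i).choose t : ℝ) * (a + i + 1) =
        (a + (i + 1)).choose t * (a + i + 1 - t) := by
      have h := Nat.choose_mul_succ_eq (a + i) t
      rw [← Nat.cast_inj (R := ℝ)] at h
      push_cast [Nat.cast_sub (show t ≤ a + i + 1 by lia)] at h
      exact h
    have hpos : (0 : ℝ) < a + i + 1 - t := by linarith [i.cast_nonneg (α := ℝ)]
    have hratio : ((a : ℝ) + i + 1) / (a + i + 1 - t) ≤ Real.exp (t / (a - t + 1)) :=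
      calc ((a : ℝ) + i + 1) / (a + i + 1 - t) = t / (a + i + 1 - t) + 1 := by
            field_simp
            ring
        _ ≤ t / (a - t + 1) + 1 := by
            gcongr ?_ + 1
            exact div_le_div_of_nonneg_left t.cast_nonneg (by linarith)
              (by linarith [i.cast_nonneg (α := ℝ)])
        _ ≤ Real.exp (t / (a - t + 1)) := Real.add_one_le_exp _
    calc ((a + (i + 1)).choose t : ℝ)
        = (a + i).choose t * ((a + i + 1) / (a + i + 1 - t)) := by
          rw [← mul_div_assoc, hrec, mul_div_cancel_right₀ _ hpos.ne']
      _ ≤ a.choose t * Real.exp (i * (t / (a - t + 1))) * Real.exp (t / (a - t + 1)) := by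
          gcongr
      _ = a.choose t * Real.exp (((i + 1 : ℕ) : ℝ) * (t / (a - t + 1))) := by
          rw [mul_assoc, ← Real.exp_add]
          push_cast
          ring_nf

lemma mul_choose_half_add_le_succ (d i : ℕ) :
    d * d.choose (d / 2 + i) ≤
      d * d.choose (d / 2 + (i + 1)) + 2 * (2 * i + 1) * d.choose (d / 2) := by
  set m := d / 2 + i + 1
  rcases le_total (d.choose (m - 1)) (d.choose m) with hle | hle
  · exact (Nat.mul_le_mul_left d hle).trans (Nat.le_add_right _ _)
  obtain ⟨e, he⟩ := Nat.exists_eq_add_of_le hle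
  have hrec : d.choose m * m = d.choose (m - 1) * (d - (m - 1)) :=
    Nat.choose_succ_right_eq d (d / 2 + i)
  have hdiff : m * e ≤ (2 * i + 1) * d.choose (m - 1) := by
    have hm : m ≤ (d - (m - 1)) + (2 * i + 1) := by lia
    refine Nat.le_of_add_le_add_left (a := d.choose m * m) ?_
    calc d.choose m * m + m * e = d.choose (m - 1) * m := by rw [he]; ring
      _ ≤ d.choose (m - 1) * (d - (m - 1) + (2 * i + 1)) := Nat.mul_le_mul_left _ hm
      _ = d.choose m * m + (2 * i + 1) * d.choose (m - 1) := by rw [hrec]; ring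
  calc d * d.choose (m - 1) = d * d.choose m + d * e := by rw [he, mul_add]
    _ ≤ d * d.choose m + 2 * (m * e) := by
        rw [← mul_assoc]
        gcongr
        lia
    _ ≤ d * d.choose m + 2 * ((2 * i + 1) * d.choose (d / 2)) := by
        grw [hdiff, Nat.choose_le_middle (m - 1) d]
    _ = d * d.choose m + 2 * (2 * i + 1) * d.choose (d / 2) := by ring

lemma mul_choose_half_le (d i : ℕ) :
    d * d.choose (d / 2) ≤ d * d.choose (d / 2 + i) + 2 * i ^ 2 * d.choose (d / 2) := by
  induction i with
  | zero => simp
  | succ i ih => linarith [mul_choose_half_add_le_succ d i]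

lemma sixteen_pow_le_centralBinom_sq_mul (n : ℕ) : 16 ^ n ≤ n.centralBinom ^ 2 * (4 * n + 1) := by
  induction n with
  | zero => simp
  | succ n ih =>
    have hrec := Nat.succ_mul_centralBinom_succ n
    refine Nat.le_of_mul_le_mul_left ?_ (show 0 < (n + 1) ^ 2 by positivity)
    calc (n + 1) ^ 2 * 16 ^ (n + 1) = 16 ^ n * (16 * (n + 1) ^ 2) := by ring
      _ ≤ n.centralBinom ^ 2 * (4 * n + 1) * (16 * (n + 1) ^ 2) := Nat.mul_le_mul_right _ ih
      _ = n.centralBinom ^ 2 * ((4 * n + 1) * (16 * (n + 1) ^ 2)) := mul_assoc _ _ _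
      _ ≤ n.centralBinom ^ 2 * ((2 * (2 * n + 1)) ^ 2 * (4 * (n + 1) + 1)) :=
          Nat.mul_le_mul_left _ (by nlinarith)
      _ = (2 * (2 * n + 1) * n.centralBinom) ^ 2 * (4 * (n + 1) + 1) := by ring
      _ = (n + 1) ^ 2 * ((n + 1).centralBinom ^ 2 * (4 * (n + 1) + 1)) := by
          rw [← hrec]
          ring

lemma four_pow_le_choose_half_sq_mul (d : ℕ) :
    4 ^ d ≤ d.choose (d / 2) ^ 2 * (2 * d + 3) := by
  obtain ⟨m, rfl | rfl⟩ := d.even_or_odd'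
  · rw [Nat.mul_div_cancel_left m two_pos, pow_mul, ← Nat.centralBinom_eq_two_mul_choose]
    exact (sixteen_pow_le_centralBinom_sq_mul m).trans (Nat.mul_le_mul_left _ (by lia))
  · have hhalf : (2 * m + 1) / 2 = m := by lia
    have hcentral : (m + 1).centralBinom = 2 * (2 * m + 1).choose m := by
      rw [Nat.centralBinom_eq_two_mul_choose, mul_add_one, Nat.choose_succ_succ,
        Nat.choose_symm_half, ← two_mul]
    have h := sixteen_pow_le_centralBinom_sq_mul (m + 1)
    rw [hcentral] at h
    refine Nat.le_of_mul_le_mul_left ?_ four_pos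
    calc 4 * 4 ^ (2 * m + 1)
        = 16 ^ (m + 1) := by
          rw [← pow_succ', show 2 * m + 1 + 1 = 2 * (m + 1) by ring, pow_mul]
          norm_num
      _ ≤ (2 * (2 * m + 1).choose m) ^ 2 * (4 * (m + 1) + 1) := h
      _ = 4 * ((2 * m + 1).choose ((2 * m + 1) / 2) ^ 2 * (2 * (2 * m + 1) + 3)) := by
          rw [hhalf]
          ring

end Binomials

section Parameters

variable {d n t a k : ℕ} {x : ℝ}

lemma choose_add_le_exp_one_mul_choose (hta : t ≤ a) (h : (k + 1) * t ≤ a + 1) :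
    ((a + k).choose t : ℝ) ≤ Real.exp 1 * a.choose t := by
  have h' : ((k + 1) * t : ℝ) ≤ a + 1 := mod_cast h
  have hta' : (t : ℝ) ≤ a := mod_cast hta
  refine (choose_add_le_choose_mul_exp hta k).trans ?_
  rw [mul_comm]
  gcongr
  rw [← mul_div_assoc, div_le_one (by linarith)]
  linarith

lemma le_min_exp_neg_one {r : ℝ} (hr : Real.exp (-1) ≤ r) :
    0.302 ≤ min (Real.exp (-1)) (1 - Real.exp (-r)) := by
  have hexp := Real.exp_neg_one_gt_d9
  refine le_min (by linarith) ?_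
  have hr' : 0.367 ≤ r := by linarith
  have hquad := Real.quadratic_le_exp_of_nonneg (show (0 : ℝ) ≤ 0.367 by norm_num)
  have hinv : Real.exp (-r) ≤ 0.698 :=
    calc Real.exp (-r) ≤ Real.exp (-0.367) := Real.exp_le_exp.2 (neg_le_neg hr')
      _ = (Real.exp 0.367)⁻¹ := Real.exp_neg _
      _ ≤ 0.698 := inv_le_of_inv_le₀ (by norm_num) (by norm_num at hquad ⊢; linarith)
  linarith

lemma choose_half_add_le_choose_mul_exp (hd : 0 < d) (hk : d / 2 + k ≤ d) (t : ℕ) :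
    ((d / 2 + k).choose t : ℝ) ≤ d.choose t * Real.exp (2 * (k * t) / d - t * Real.log 2) := by
  have hbase : ((d / 2 + k : ℕ) : ℝ) / d ≤ Real.exp (2 * k / d - Real.log 2) :=
    calc ((d / 2 + k : ℕ) : ℝ) / d ≤ (d / 2 + k) / d := by
          push_cast
          gcongr
          exact Nat.cast_div_le
      _ = (2 * k / d + 1) / 2 := by field_simp; ring
      _ ≤ Real.exp (2 * k / d) / 2 := by
          gcongr
          exact Real.add_one_le_exp _
      _ = Real.exp (2 * k / d - Real.log 2) := by rw [Real.exp_sub, Real.exp_log two_pos]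
  have hpow : ((d / 2 + k).choose t : ℝ) * d ^ t ≤ d.choose t * ((d / 2 + k : ℕ) : ℝ) ^ t :=
    mod_cast choose_mul_pow_le hk t
  calc ((d / 2 + k).choose t : ℝ)
      ≤ d.choose t * (((d / 2 + k : ℕ) : ℝ) / d) ^ t := by
        rwa [div_pow, ← mul_div_assoc, le_div_iff₀ (by positivity)]
    _ ≤ d.choose t * Real.exp (2 * k / d - Real.log 2) ^ t := by gcongr
    _ = d.choose t * Real.exp (2 * (k * t) / d - t * Real.log 2) := by
        rw [← Real.exp_nat_mul]
        ring_nf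

lemma exp_one_mul_choose_div_choose_le (hd : 0 < d) (hk : d / 2 + k ≤ d) (htd : t ≤ d)
    (hn : n ≤ 108 * Real.exp (x - 10)) (ht : 3 / 2 * x ≤ t)
    (hkt : (k * t : ℝ) ≤ 0.32 * d) :
    Real.exp 1 * n * (d / 2 + k).choose t / d.choose t ≤ 0.04 := by
  have hchoose : (0 : ℝ) < d.choose t := mod_cast Nat.choose_pos htd
  have hexponent : 2 * (k * t : ℝ) / d - t * Real.log 2 ≤ 0.64 - x := by
    have hkt' : 2 * (k * t : ℝ) / d ≤ 0.64 := (div_le_iff₀ (mod_cast hd)).2 (by linarith)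
    nlinarith [Real.log_two_gt_d9]
  have hexp : Real.exp (-8.36) ≤ 0.00037 :=
    calc Real.exp (-8.36) ≤ Real.exp ((8 : ℕ) * (-1)) := Real.exp_le_exp.2 (by norm_num)
      _ = Real.exp (-1) ^ 8 := Real.exp_nat_mul _ _
      _ ≤ 0.37 ^ 8 := by
          gcongr
          linarith [Real.exp_neg_one_lt_d9]
      _ ≤ 0.00037 := by norm_num
  calc Real.exp 1 * n * (d / 2 + k).choose t / d.choose t
      ≤ Real.exp 1 * (108 * Real.exp (x - 10)) *
          (d.choose t * Real.exp (0.64 - x)) / d.choose t := by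
        gcongr
        exact (choose_half_add_le_choose_mul_exp hd hk t).trans (by gcongr)
    _ = 108 * (Real.exp 1 * Real.exp (x - 10) * Real.exp (0.64 - x)) := by field_simp
    _ = 108 * Real.exp (-8.36) := by
        rw [← Real.exp_add, ← Real.exp_add]
        ring_nf
    _ ≤ 0.04 := by linarith

lemma mul_choose_half_le_sum_choose (hd : 0 < d) (hk : 25 * k ^ 2 ≤ d) :
    0.92 * (k + 1) * (d.choose (d / 2) : ℝ) ≤ ∑ j ∈ Icc (d / 2) (d / 2 + k), (d.choose j : ℝ) := by
  have hlayer : ∀ j ∈ Icc (d / 2) (d / 2 + k), 0.92 * (d.choose (d / 2) : ℝ) ≤ d.choose j := by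
    intro j hj
    obtain ⟨i, rfl⟩ := Nat.exists_eq_add_of_le (mem_Icc.1 hj).1
    have hik : i ≤ k := by simpa using (mem_Icc.1 hj).2
    have hi : 25 * i ^ 2 ≤ d := (Nat.mul_le_mul_left _ (Nat.pow_le_pow_left hik 2)).trans hk
    have hi' : (25 * i ^ 2 : ℝ) ≤ d := mod_cast hi
    have h : (d * d.choose (d / 2) : ℝ) ≤
        d * d.choose (d / 2 + i) + 2 * i ^ 2 * d.choose (d / 2) := mod_cast mul_choose_half_le d i
    refine le_of_mul_le_mul_left ?_ (show (0 : ℝ) < d from mod_cast hd)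
    nlinarith [(d.choose (d / 2)).cast_nonneg (α := ℝ)]
  have h := card_nsmul_le_sum _ _ _ hlayer
  rw [Nat.card_Icc, nsmul_eq_mul, add_assoc, Nat.add_sub_cancel_left] at h
  push_cast at h
  linarith

lemma two_pow_le_sqrt_mul_choose_half (hd : 100 ≤ d) :
    (2 : ℝ) ^ d ≤ 1.425 * √d * d.choose (d / 2) := by
  have hd' : (100 : ℝ) ≤ d := mod_cast hd
  have h : (4 : ℝ) ^ d ≤ d.choose (d / 2) ^ 2 * (2 * d + 3) :=
    mod_cast four_pow_le_choose_half_sq_mul d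
  refine le_of_sq_le_sq ?_ (by positivity)
  calc ((2 : ℝ) ^ d) ^ 2 = 4 ^ d := by rw [← pow_mul, mul_comm, pow_mul]; norm_num
    _ ≤ d.choose (d / 2) ^ 2 * (2 * d + 3) := h
    _ ≤ d.choose (d / 2) ^ 2 * (1.425 ^ 2 * d) := by
        gcongr
        linarith
    _ = (1.425 * √d * d.choose (d / 2)) ^ 2 := by
        rw [mul_pow, mul_pow, Real.sq_sqrt d.cast_nonneg]
        ring

lemma lt_errorBound (hd : 100 ≤ d) (hx : 0 < x) (hta : t ≤ d / 2) (hkd : d / 2 + k ≤ d)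
    (hkta : (k + 1) * t ≤ d / 2 + 1) (hkt : (k * t : ℝ) ≤ 0.32 * d) (hk : 25 * k ^ 2 ≤ d)
    (hk' : d / (5 * x) < k + 1) (ht : 3 / 2 * x ≤ t) (hn : n ≤ 108 * Real.exp (x - 10)) :
    √d / (30 * x) * 2 ^ d < errorBound d n t (d / 2) (d / 2 + k) := by
  have hd0 : 0 < d := by lia
  have hratio : Real.exp (-1) ≤ (d / 2).choose t / (d / 2 + k).choose t := by
    have hchoose : (0 : ℝ) < (d / 2 + k).choose t :=
      mod_cast Nat.choose_pos (hta.trans (Nat.le_add_right _ k))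
    rw [le_div_iff₀ hchoose, Real.exp_neg, inv_mul_le_iff₀ (Real.exp_pos 1)]
    exact choose_add_le_exp_one_mul_choose hta hkta
  have herror := le_min_exp_neg_one hratio
  have hloss := exp_one_mul_choose_div_choose_le hd0 hkd (hta.trans (Nat.div_le_self d 2)) hn ht hkt
  have hmiddle : (0 : ℝ) < d.choose (d / 2) := mod_cast Nat.choose_pos (Nat.div_le_self d 2)
  calc √d / (30 * x) * 2 ^ d
      ≤ √d / (30 * x) * (1.425 * √d * d.choose (d / 2)) := by
        gcongr
        exact two_pow_le_sqrt_mul_choose_half hd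
    _ = 0.2375 * (d / (5 * x)) * d.choose (d / 2) := by
        nth_rw 3 [← Real.sq_sqrt d.cast_nonneg]
        field_simp
        ring
    _ < 0.262 * (0.92 * (k + 1) * d.choose (d / 2)) := by
        have : 0.2375 * (d / (5 * x)) < 0.262 * 0.92 * (k + 1) := by nlinarith
        nlinarith
    _ ≤ errorBound d n t (d / 2) (d / 2 + k) := by
        rw [errorBound]
        push_cast
        exact mul_le_mul (by linarith) (mul_choose_half_le_sum_choose hd0 hk) (by positivity)
          (by linarith)


lemma mul_floor_div_sq_le (hx : 0 < x) (hdx : (d : ℝ) ≤ x ^ 2) :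
    25 * ⌊d / (5 * x)⌋₊ ^ 2 ≤ d := by
  have hfloor : (⌊d / (5 * x)⌋₊ : ℝ) ≤ d / (5 * x) := Nat.floor_le (by positivity)
  rw [← Nat.cast_le (α := ℝ)]
  push_cast
  calc (25 * (⌊d / (5 * x)⌋₊ : ℝ) ^ 2) ≤ 25 * (d / (5 * x)) ^ 2 := by gcongr
    _ = d * (d / x ^ 2) := by field_simp; ring
    _ ≤ d := mul_le_of_le_one_right d.cast_nonneg ((div_le_one (by positivity)).2 hdx)

lemma exists_lt_errorBound (hd : 0 < d) (hx : √d ≤ x) (hxd : 10 * x ≤ d)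
    (hn : n ≤ 108 * Real.exp (x - 10)) :
    ∃ t a b, t ≤ a ∧ a ≤ b ∧ b ≤ d ∧ √d / (30 * x) * 2 ^ d < errorBound d n t a b := by
  have hd0 : (0 : ℝ) < d := mod_cast hd
  have hx0 : 0 < x := (Real.sqrt_pos.2 hd0).trans_le hx
  have hdx : (d : ℝ) ≤ x ^ 2 := (Real.sqrt_le_left hx0.le).1 hx
  have hx10 : 10 ≤ x := by nlinarith
  have hd100 : 100 ≤ d := (Nat.cast_le (α := ℝ)).1 (by push_cast; linarith)
  set t := ⌈3 / 2 * x⌉₊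
  set k := ⌊d / (5 * x)⌋₊
  have ht : 3 / 2 * x ≤ t := Nat.le_ceil _
  have ht' : t ≤ 1.6 * x := by linarith [Nat.ceil_lt_add_one (show 0 ≤ 3 / 2 * x by positivity)]
  have hk : k ≤ d / (5 * x) := Nat.floor_le (by positivity)
  have hkt : (k * t : ℝ) ≤ 0.32 * d :=
    calc (k * t : ℝ) ≤ d / (5 * x) * (1.6 * x) := by gcongr
      _ = 0.32 * d := by field_simp; norm_num
  have hk25 : 25 * k ^ 2 ≤ d := mul_floor_div_sq_le hx0 hdx
  have hkd : 2 * k ≤ d := by nlinarith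
  have hta : 2 * t ≤ d := (Nat.cast_le (α := ℝ)).1 (by push_cast; linarith)
  have hkta : 2 * ((k + 1) * t) ≤ d := (Nat.cast_le (α := ℝ)).1 (by push_cast; linarith)
  have hta' : t ≤ d / 2 := by lia
  have hkd' : d / 2 + k ≤ d := by lia
  exact ⟨t, d / 2, d / 2 + k, hta', Nat.le_add_right _ _, hkd', lt_errorBound hd100 hx0 hta' hkd'
    (by lia) hkt hk25 (Nat.lt_floor_add_one _) ht hn⟩

lemma exists_mul_two_pow_lt_errorBound {ε : ℝ} (hε0 : 0 < ε) (hε : ε ≤ 1 / 30)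
    (hd : 1 / (9 * ε ^ 2) ≤ d) (hn : n ≤ 108 * Real.exp (√d / (30 * ε) - 10)) :
    ∃ t a b, t ≤ a ∧ a ≤ b ∧ b ≤ d ∧ ε * 2 ^ d < errorBound d n t a b := by
  have hd0 : 0 < d := Nat.cast_pos.1 ((by positivity : 0 < 1 / (9 * ε ^ 2)).trans_le hd)
  have hsqrt0 : 0 < √d := Real.sqrt_pos.2 (mod_cast hd0)
  have hsqrt : 1 / (3 * ε) ≤ √d := by
    refine Real.le_sqrt_of_sq_le ?_
    rwa [div_pow, mul_pow, one_pow, show (3 : ℝ) ^ 2 = 9 by norm_num]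
  have hx : √d ≤ √d / (30 * ε) := le_div_self hsqrt0.le (by positivity) (by linarith)
  have hxd : 10 * (√d / (30 * ε)) ≤ d :=
    calc 10 * (√d / (30 * ε)) = √d * (1 / (3 * ε)) := by field_simp; norm_num
      _ ≤ √d * √d := by gcongr
      _ = d := Real.mul_self_sqrt d.cast_nonneg
  have hε_eq : √d / (30 * (√d / (30 * ε))) = ε := by field_simp
  simpa only [hε_eq] using exists_lt_errorBound hd0 hx hxd hn

end Parameters

end MonotoneSampling

theorem stmt13 (ε : ℝ) (hε0 : 0 < ε) (hε : ε ≤ 1 / 30)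
    (d : ℕ) (hd : 1 / (9 * ε ^ 2) ≤ (d : ℝ))
    (n : ℕ) (hn : (n : ℝ) ≤ 108 * Real.exp (Real.sqrt d / (30 * ε) - 10))
    {Ω : Type*} [MeasurableSpace Ω] (P : Measure Ω) [IsProbabilityMeasure P]
    -- the adaptive choice of the next sample point from previously observed values
    (L : Ω → (k : Fin n) → (Fin (k : ℕ) → Bool) → (Fin d → Bool))
    -- the sample points used for an input `f`
    (pts : Ω → ((Fin d → Bool) → Bool) → Fin n → (Fin d → Bool))
    (hpts : ∀ (ω : Ω) (f : (Fin d → Bool) → Bool) (k : Fin n),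
      pts ω f k = L ω k (fun j => f (pts ω f (Fin.castLE k.isLt.le j))))
    -- the output, depending on `f` only through the observed values
    (A : Ω → (Fin n → Bool) → ((Fin d → Bool) → Bool))
    (hmeas : ∀ f : (Fin d → Bool) → Bool,
      Measurable fun ω =>
        (((Finset.univ.filter fun x : Fin d → Bool =>
            f x ≠ A ω (fun k => f (pts ω f k)) x).card : ℝ))) :
    ENNReal.ofReal ε <
      ⨆ f : {f : (Fin d → Bool) → Bool //
          ∀ x z : Fin d → Bool, (∀ j, x j ≤ z j) → f x ≤ f z},
        ∫⁻ ω, ENNReal.ofReal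
          (((Finset.univ.filter fun x : Fin d → Bool =>
              f.1 x ≠ A ω (fun k => f.1 (pts ω f.1 k)) x).card : ℝ) / 2 ^ d) ∂P := by
  obtain ⟨t, a, b, hta, hab, hb, hlt⟩ :=
    MonotoneSampling.exists_mul_two_pow_lt_errorBound hε0 hε hd hn
  have hout : ∀ ω, MonotoneSampling.IsDeterminedBy (fun f => A ω fun k => f (pts ω f k))
      fun f => Finset.univ.image (pts ω f) := fun ω =>
    MonotoneSampling.isDeterminedBy_of_adaptive (hpts ω) (A ω)
  have hcard : ∀ ω f, (Finset.univ.image (pts ω f)).card ≤ n := fun ω f =>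
    Finset.card_image_le.trans_eq (Finset.card_fin n)
  have hbound := MonotoneSampling.ofReal_errorBound_div_le_iSup_lintegral (P := P) hout hcard
    hmeas hta hab (hb.trans_eq (Fintype.card_fin d).symm)
  rw [Fintype.card_fin] at hbound
  have hε_lt : ε < MonotoneSampling.errorBound d n t a b / 2 ^ d :=
    (lt_div_iff₀ (by positivity)).2 hlt
  exact ((ENNReal.ofReal_lt_ofReal_iff (hε0.trans hε_lt)).2 hε_lt).trans_le hbound
end
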